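/- arXiv:2407.06364 — 2 statements merged into one kernel-verified Lean document; each statement's English description precedes it below -/
import Mathlib

section
/- Let R be a right Noetherian ring and M a right R-module, and let ℰ be the class of all right R-modules of finite injective dimension. If Ext^i_R(L, M) = 0 for every L ∈ ℰ and all i > 0, then there exists an ℰ-precover f : E → M in which E is an injective right R-module. -/
open Function MulOpposite

universe u

noncomputable section

/-! ## Chain conditions -/

/-- A ring is right coherent if every finitely generated right ideal is finitely presented. -/
def IsRightCoherentRing (R : Type u) [Ring R] : Prop :=
  ∀ I : Submodule Rᵐᵒᵖ R, I.FG → Module.FinitePresentation Rᵐᵒᵖ I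

/-- A ring is left coherent if every finitely generated left ideal is finitely presented. -/
def IsLeftCoherentRing (S : Type u) [Ring S] : Prop :=
  ∀ I : Submodule S S, I.FG → Module.FinitePresentation S I

/-- A ring is right Noetherian if every right ideal is finitely generated. -/
def IsRightNoetherianRing (R : Type u) [Ring R] : Prop :=
  ∀ I : Submodule Rᵐᵒᵖ R, I.FG

/-! ## The tensor product `N ⊗_S T` of a right `S`-module `N` with a left `S`-module `T` -/

section MTensor

variable (S : Type u) [Ring S]
variable (N : Type u) [AddCommGroup N] [Module Sᵐᵒᵖ N]
variable (T : Type u) [AddCommGroup T] [Module S T]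

/-- The subgroup of balancing relations defining `N ⊗_S T` as a quotient of `T ⊗_ℤ N`. -/
def mtRel : AddSubgroup (TensorProduct ℤ T N) :=
  AddSubgroup.closure
    {x | ∃ (s : S) (t : T) (n : N), x = (s • t) ⊗ₜ[ℤ] n - t ⊗ₜ[ℤ] (op s • n)}

/-- `MTensor S N T` is the tensor product `N ⊗_S T` of a right `S`-module `N` with a left
`S`-module `T`, realized as a quotient of `T ⊗_ℤ N`. -/
def MTensor : Type u := TensorProduct ℤ T N ⧸ mtRel S N T

instance : AddCommGroup (MTensor S N T) :=
  inferInstanceAs (AddCommGroup (TensorProduct ℤ T N ⧸ mtRel S N T))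

variable {S N T}

/-- `MTensor.mk n t` is the element `n ⊗ t` of `N ⊗_S T`. -/
def MTensor.mk (n : N) (t : T) : MTensor S N T := QuotientAddGroup.mk (t ⊗ₜ[ℤ] n)

section Map

variable {N' : Type u} [AddCommGroup N'] [Module Sᵐᵒᵖ N']

/-- Functoriality of `N ⊗_S T` in the right `S`-module variable `N`. -/
def MTensor.map (g : N →ₗ[Sᵐᵒᵖ] N') : MTensor S N T →+ MTensor S N' T :=
  QuotientAddGroup.map _ _
    (LinearMap.lTensor T g.toAddMonoidHom.toIntLinearMap).toAddMonoidHom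
    (by
      refine (AddSubgroup.closure_le _).2 ?_
      rintro x ⟨s, t, n, rfl⟩
      simp only [SetLike.mem_coe, AddSubgroup.mem_comap, LinearMap.toAddMonoidHom_coe,
        map_sub, LinearMap.lTensor_tmul, AddMonoidHom.coe_toIntLinearMap,
        LinearMap.toAddMonoidHom_coe, map_smul]
      exact AddSubgroup.subset_closure ⟨s, t, g n, rfl⟩)

end Map

section LMap

variable {T' : Type u} [AddCommGroup T'] [Module S T']

/-- Functoriality of `N ⊗_S T` in the left `S`-module variable `T`. -/
def MTensor.lmap (h : T →ₗ[S] T') : MTensor S N T →+ MTensor S N T' :=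
  QuotientAddGroup.map _ _
    (LinearMap.rTensor N h.toAddMonoidHom.toIntLinearMap).toAddMonoidHom
    (by
      refine (AddSubgroup.closure_le _).2 ?_
      rintro x ⟨s, t, n, rfl⟩
      simp only [SetLike.mem_coe, AddSubgroup.mem_comap, LinearMap.toAddMonoidHom_coe,
        map_sub, LinearMap.rTensor_tmul, AddMonoidHom.coe_toIntLinearMap, map_smul]
      exact AddSubgroup.subset_closure ⟨s, h t, n, rfl⟩)

end LMap

section Bimod

variable (R : Type u) [Ring R] [Module Rᵐᵒᵖ T] [SMulCommClass S Rᵐᵒᵖ T]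

instance MTensor.instSMul : SMul Rᵐᵒᵖ (MTensor S N T) :=
  ⟨fun ρ =>
    QuotientAddGroup.map _ _ (DistribMulAction.toAddMonoidHom (TensorProduct ℤ T N) ρ)
      (by
        refine (AddSubgroup.closure_le _).2 ?_
        rintro x ⟨s, t, n, rfl⟩
        simp only [SetLike.mem_coe, AddSubgroup.mem_comap,
          DistribMulAction.toAddMonoidHom_apply, smul_sub, TensorProduct.smul_tmul']
        exact AddSubgroup.subset_closure ⟨s, ρ • t, n, by rw [smul_comm s ρ t]⟩)⟩

instance MTensor.instModule : Module Rᵐᵒᵖ (MTensor S N T) :=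
  Function.Surjective.module Rᵐᵒᵖ (QuotientAddGroup.mk' (mtRel S N T))
    (QuotientAddGroup.mk'_surjective _) (fun _ _ => rfl)

theorem MTensor.smul_mk (ρ : Rᵐᵒᵖ) (n : N) (t : T) :
    ρ • (MTensor.mk n t : MTensor S N T) = MTensor.mk n (ρ • t) := by
  show QuotientAddGroup.mk (ρ • (t ⊗ₜ[ℤ] n)) = QuotientAddGroup.mk ((ρ • t) ⊗ₜ[ℤ] n)
  rw [TensorProduct.smul_tmul']

theorem MTensor.mk_add_right (n : N) (t t' : T) :
    (MTensor.mk n (t + t') : MTensor S N T) = MTensor.mk n t + MTensor.mk n t' := by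
  show QuotientAddGroup.mk _ = _
  rw [TensorProduct.add_tmul]
  rfl

/-- The natural map `θ_N : N → Hom_R(T, N ⊗_S T)`, `n ↦ (t ↦ n ⊗ t)`. -/
def MTensor.theta (n : N) : T →ₗ[Rᵐᵒᵖ] MTensor S N T where
  toFun t := MTensor.mk n t
  map_add' t t' := MTensor.mk_add_right n t t'
  map_smul' ρ t := (MTensor.smul_mk R ρ n t).symm

variable (S T N) in
/-- The natural map `θ_N : N → Hom_R(T, N ⊗_S T)` as a function. -/
def MTensor.thetaFun : N → (T →ₗ[Rᵐᵒᵖ] MTensor S N T) := fun n => MTensor.theta R n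

end Bimod

end MTensor

/-! ## The right `S`-module structure on `Hom_A(T, M)` induced by a left `S`-action on `T` -/

section HomModule

variable {B A : Type u} [Ring B] [Ring A]
variable {T : Type u} [AddCommGroup T] [Module A T] [Module B T] [SMulCommClass B A T]
variable {M : Type u} [AddCommGroup M] [Module A M]

instance homDomSMul : SMul Bᵐᵒᵖ (T →ₗ[A] M) :=
  ⟨fun b f =>
    { toFun := fun t => f (b.unop • t)
      map_add' := fun t t' => by
        show f (b.unop • (t + t')) = f (b.unop • t) + f (b.unop • t')
        rw [smul_add, map_add]
      map_smul' := fun a t => by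
        show f (b.unop • a • t) = a • f (b.unop • t)
        rw [smul_comm b.unop a t, map_smul] }⟩

@[simp] theorem homDomSMul_apply (b : Bᵐᵒᵖ) (f : T →ₗ[A] M) (t : T) :
    (b • f) t = f (b.unop • t) := rfl

instance homDomModule : Module Bᵐᵒᵖ (T →ₗ[A] M) where
  one_smul f := LinearMap.ext fun t => by simp
  mul_smul b b' f := LinearMap.ext fun t => by simp [mul_smul]
  smul_zero b := LinearMap.ext fun t => rfl
  smul_add b f g := LinearMap.ext fun t => rfl
  add_smul b b' f := LinearMap.ext fun t => by simp [add_smul]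
  zero_smul f := LinearMap.ext fun t => by simp

end HomModule

/-! ## The evaluation map `ν_M : Hom_R(T, M) ⊗_S T → M` -/

section Nu

variable (S R : Type u) [Ring S] [Ring R]
variable (T : Type u) [AddCommGroup T] [Module S T] [Module Rᵐᵒᵖ T] [SMulCommClass S Rᵐᵒᵖ T]
variable (M : Type u) [AddCommGroup M] [Module Rᵐᵒᵖ M]

/-- The evaluation map `ν_M : Hom_R(T, M) ⊗_S T → M`, `f ⊗ t ↦ f t`. -/
def MTensor.nuFun : MTensor S (T →ₗ[Rᵐᵒᵖ] M) T →+ M :=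
  QuotientAddGroup.lift _
    (TensorProduct.liftAddHom
      { toFun := fun t =>
          { toFun := fun f : T →ₗ[Rᵐᵒᵖ] M => f t
            map_zero' := rfl
            map_add' := fun f g => rfl }
        map_zero' := AddMonoidHom.ext fun f => f.map_zero
        map_add' := fun t t' => AddMonoidHom.ext fun f => f.map_add t t' }
      (fun z t f => by
        show f (z • t) = (z • f) t
        rw [map_zsmul, LinearMap.smul_apply]))
    (by
      refine (AddSubgroup.closure_le _).2 ?_
      rintro x ⟨s, t, f, rfl⟩
      simp only [SetLike.mem_coe, AddMonoidHom.mem_ker, map_sub,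
        TensorProduct.liftAddHom_tmul, AddMonoidHom.coe_mk, ZeroHom.coe_mk]
      show f (s • t) - (op s • f) t = 0
      rw [homDomSMul_apply]
      simp)

end Nu


/-! ## Resolutions and derived-functor vanishing -/

/-- The data of a nonnegatively graded chain complex `⋯ → P 1 → P 0 → X` of `A`-modules. -/
structure ResolutionData (A : Type u) [Ring A] (X : Type u) [AddCommGroup X] [Module A X] :
    Type (u + 1) where
  P : ℕ → Type u
  [instAdd : ∀ n, AddCommGroup (P n)]
  [instMod : ∀ n, Module A (P n)]
  d : ∀ n, P (n + 1) →ₗ[A] P n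
  ε : P 0 →ₗ[A] X

attribute [instance] ResolutionData.instAdd ResolutionData.instMod

/-- The property of being a projective resolution. -/
structure ResolutionData.IsProjResolution {A : Type u} [Ring A] {X : Type u} [AddCommGroup X]
    [Module A X] (Q : ResolutionData A X) : Prop where
  proj : ∀ n, Module.Projective A (Q.P n)
  surj : Function.Surjective Q.ε
  exact0 : Function.Exact (Q.d 0) Q.ε
  exactSucc : ∀ n, Function.Exact (Q.d (n + 1)) (Q.d n)

/-- `X` has a resolution by finitely generated projective `A`-modules. -/
def HasFGProjResolution (A : Type u) [Ring A] (X : Type u) [AddCommGroup X] [Module A X] : Prop :=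
  ∃ Q : ResolutionData A X, Q.IsProjResolution ∧ ∀ n, Module.Finite A (Q.P n)

/-- `Ext^i_A(X, Y) = 0` for all `i ≥ 1`: some (equivalently, any) projective resolution of `X`
has `Hom_A(-, Y)`-complex exact at all positive degrees. -/
def ExtVanishAll (A : Type u) [Ring A] (X Y : Type u) [AddCommGroup X] [Module A X]
    [AddCommGroup Y] [Module A Y] : Prop :=
  ∃ Q : ResolutionData A X, Q.IsProjResolution ∧
    ∀ j : ℕ, Function.Exact
      (fun f : Q.P j →ₗ[A] Y => f.comp (Q.d j))
      (fun f : Q.P (j + 1) →ₗ[A] Y => f.comp (Q.d (j + 1)))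

/-- `Ext^1_A(X, Y) = 0`: every short exact sequence `0 → Y → E → X → 0` splits. -/
def Ext1Vanishes (A : Type u) [Ring A] (X Y : Type u) [AddCommGroup X] [Module A X]
    [AddCommGroup Y] [Module A Y] : Prop :=
  ∀ (E : Type u) [AddCommGroup E] [Module A E] (i : Y →ₗ[A] E) (p : E →ₗ[A] X),
    Function.Injective i → Function.Surjective p → Function.Exact i p →
      ∃ s : X →ₗ[A] E, p.comp s = LinearMap.id

/-- `Tor^S_i(N, T) = 0` for all `i ≥ 1`: some (equivalently, any) projective resolution of the
right `S`-module `N` stays exact in positive degrees after applying `- ⊗_S T`. -/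
def TorVanishAll (S : Type u) [Ring S] (N : Type u) [AddCommGroup N] [Module Sᵐᵒᵖ N]
    (T : Type u) [AddCommGroup T] [Module S T] : Prop :=
  ∃ Q : ResolutionData Sᵐᵒᵖ N, Q.IsProjResolution ∧
    ∀ j : ℕ, Function.Exact
      (⇑(MTensor.map (T := T) (Q.d (j + 1))))
      (⇑(MTensor.map (T := T) (Q.d j)))

/-! ## Homological dimensions -/

/-- A surjection onto `M` from some module. -/
structure EpiOnto (A : Type u) [Ring A] (M : ModuleCat.{u} A) : Type (u + 1) where
  P : ModuleCat.{u} A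
  f : P →ₗ[A] M
  surj : Function.Surjective f

/-- An injection of `M` into some module. -/
structure MonoInto (A : Type u) [Ring A] (M : ModuleCat.{u} A) : Type (u + 1) where
  E : ModuleCat.{u} A
  f : M →ₗ[A] E
  inj : Function.Injective f

/-- `HasClassResolution A 𝒞 n M` says that there is an exact sequence
`0 → C_n → ⋯ → C_0 → M → 0` with all `C_i` in the class `𝒞`. -/
def HasClassResolution (A : Type u) [Ring A] (C : ModuleCat.{u} A → Prop) :
    ℕ → ModuleCat.{u} A → Prop
  | 0, M => C M
  | n + 1, M => ∃ e : EpiOnto A M, C e.P ∧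
      HasClassResolution A C n (ModuleCat.of A (LinearMap.ker e.f))

/-- `HasClassCoresolution A 𝒞 n M` says that there is an exact sequence
`0 → M → C^0 → ⋯ → C^n → 0` with all `C^i` in the class `𝒞`. -/
def HasClassCoresolution (A : Type u) [Ring A] (C : ModuleCat.{u} A → Prop) :
    ℕ → ModuleCat.{u} A → Prop
  | 0, M => C M
  | n + 1, M => ∃ m : MonoInto A M, C m.E ∧
      HasClassCoresolution A C n (ModuleCat.of A ((↥m.E) ⧸ LinearMap.range m.f))

/-- The projective dimension of `M` is at most `n`. -/
def ProjDimLE (A : Type u) [Ring A] (M : Type u) [AddCommGroup M] [Module A M] (n : ℕ) : Prop :=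
  HasClassResolution A (fun P => Module.Projective A P) n (ModuleCat.of A M)

/-- The injective dimension of `M` is at most `n`. -/
def InjDimLE (A : Type u) [Ring A] (M : Type u) [AddCommGroup M] [Module A M] (n : ℕ) : Prop :=
  HasClassCoresolution A (fun E => Module.Injective A E) n (ModuleCat.of A M)

/-- A right `S`-module `N` is flat if `N ⊗_S -` preserves injections of left `S`-modules. -/
def IsFlatRightModule (S : Type u) [Ring S] (N : Type u) [AddCommGroup N] [Module Sᵐᵒᵖ N] :
    Prop :=
  ∀ (X Y : Type u) [AddCommGroup X] [Module S X] [AddCommGroup Y] [Module S Y]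
    (g : X →ₗ[S] Y), Function.Injective g →
      Function.Injective (MTensor.lmap (N := N) g)

/-- The flat dimension of the right `S`-module `N` is at most `n`. -/
def FlatDimLE (S : Type u) [Ring S] (N : Type u) [AddCommGroup N] [Module Sᵐᵒᵖ N] (n : ℕ) :
    Prop :=
  HasClassResolution Sᵐᵒᵖ (fun P => IsFlatRightModule S P) n (ModuleCat.of Sᵐᵒᵖ N)

/-! ## Gorenstein homological algebra -/

/-- The data of a `ℤ`-indexed complex of `A`-modules. -/
structure ZComplex (A : Type u) [Ring A] : Type (u + 1) where
  P : ℤ → Type u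
  [instAdd : ∀ i, AddCommGroup (P i)]
  [instMod : ∀ i, Module A (P i)]
  d : ∀ i, P i →ₗ[A] P (i + 1)

attribute [instance] ZComplex.instAdd ZComplex.instMod

/-- Exactness of a `ℤ`-indexed complex. -/
def ZComplex.IsExact {A : Type u} [Ring A] (C : ZComplex A) : Prop :=
  ∀ i, Function.Exact (C.d i) (C.d (i + 1))

/-- A module is Gorenstein projective if it is a kernel of a totally acyclic complex of
projective modules. -/
def IsGorensteinProjective (A : Type u) [Ring A] (N : Type u) [AddCommGroup N] [Module A N] :
    Prop :=
  ∃ C : ZComplex A, (∀ i, Module.Projective A (C.P i)) ∧ C.IsExact ∧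
    (∀ (Q : Type u) [AddCommGroup Q] [Module A Q], Module.Projective A Q →
      ∀ i, Function.Exact
        (fun f : C.P (i + 1 + 1) →ₗ[A] Q => f.comp (C.d (i + 1)))
        (fun f : C.P (i + 1) →ₗ[A] Q => f.comp (C.d i))) ∧
    Nonempty (N ≃ₗ[A] LinearMap.ker (C.d 0))

/-- A module is Gorenstein injective if it is a kernel of a totally acyclic complex of
injective modules. -/
def IsGorensteinInjective (A : Type u) [Ring A] (M : Type u) [AddCommGroup M] [Module A M] :
    Prop :=
  ∃ C : ZComplex A, (∀ i, Module.Injective A (C.P i)) ∧ C.IsExact ∧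
    (∀ (I : Type u) [AddCommGroup I] [Module A I], Module.Injective A I →
      ∀ i, Function.Exact
        (fun f : I →ₗ[A] C.P i => (C.d i).comp f)
        (fun f : I →ₗ[A] C.P (i + 1) => (C.d (i + 1)).comp f)) ∧
    Nonempty (M ≃ₗ[A] LinearMap.ker (C.d 0))

/-- A right `S`-module is Gorenstein flat if it is a kernel of a complex of flat right
`S`-modules which stays exact after tensoring with any injective left `S`-module. -/
def IsGorensteinFlat (S : Type u) [Ring S] (N : Type u) [AddCommGroup N] [Module Sᵐᵒᵖ N] :
    Prop :=
  ∃ C : ZComplex Sᵐᵒᵖ, (∀ i, IsFlatRightModule S (C.P i)) ∧ C.IsExact ∧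
    (∀ (I : Type u) [AddCommGroup I] [Module S I], Module.Injective S I →
      ∀ i, Function.Exact
        (⇑(MTensor.map (T := I) (C.d i)))
        (⇑(MTensor.map (T := I) (C.d (i + 1))))) ∧
    Nonempty (N ≃ₗ[Sᵐᵒᵖ] LinearMap.ker (C.d 0))

/-- The Gorenstein projective dimension of `N` is at most `n`. -/
def GpdLE (A : Type u) [Ring A] (N : Type u) [AddCommGroup N] [Module A N] (n : ℕ) : Prop :=
  HasClassResolution A (fun P => IsGorensteinProjective A P) n (ModuleCat.of A N)

/-- The Gorenstein flat dimension of the right `S`-module `N` is at most `n`. -/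
def GfdLE (S : Type u) [Ring S] (N : Type u) [AddCommGroup N] [Module Sᵐᵒᵖ N] (n : ℕ) : Prop :=
  HasClassResolution Sᵐᵒᵖ (fun P => IsGorensteinFlat S P) n (ModuleCat.of Sᵐᵒᵖ N)

/-- The Gorenstein injective dimension of `M` is at most `n`. -/
def GidLE (A : Type u) [Ring A] (M : Type u) [AddCommGroup M] [Module A M] (n : ℕ) : Prop :=
  HasClassCoresolution A (fun E => IsGorensteinInjective A E) n (ModuleCat.of A M)

/-! ## Module classes `Prod(C)`, `Add(C)`, `add(C)` and (co)generators -/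

/-- `M` is a retract (equivalently, a direct summand up to isomorphism) of `P`. -/
def IsRetractOf (A : Type u) [Ring A] (M P : Type u) [AddCommGroup M] [Module A M]
    [AddCommGroup P] [Module A P] : Prop :=
  ∃ (f : M →ₗ[A] P) (g : P →ₗ[A] M), g.comp f = LinearMap.id

/-- `Prod(C)`: direct summands of direct products of copies of `C`. -/
def InProdClass (A : Type u) [Ring A] (C : Type u) [AddCommGroup C] [Module A C]
    (M : ModuleCat.{u} A) : Prop :=
  ∃ I : Type u, IsRetractOf A M (I → C)

/-- `Add(C)`: direct summands of direct sums of copies of `C`. -/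
def InAddClass (A : Type u) [Ring A] (C : Type u) [AddCommGroup C] [Module A C]
    (M : ModuleCat.{u} A) : Prop :=
  ∃ I : Type u, IsRetractOf A M (I →₀ C)

/-- `add(C)`: direct summands of finite direct sums of copies of `C`. -/
def InFinAddClass (A : Type u) [Ring A] (C : Type u) [AddCommGroup C] [Module A C]
    (M : ModuleCat.{u} A) : Prop :=
  ∃ k : ℕ, IsRetractOf A M (Fin k → C)

/-- `Q` is an injective cogenerator: `Q` is injective and every module embeds into a direct
product of copies of `Q`. -/
def IsInjectiveCogenerator (A : Type u) [Ring A] (Q : Type u) [AddCommGroup Q] [Module A Q] :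
    Prop :=
  Module.Injective A Q ∧
    ∀ (M : Type u) [AddCommGroup M] [Module A M],
      ∃ (I : Type u) (f : M →ₗ[A] (I → Q)), Function.Injective f

/-- `E` is the minimal injective cogenerator: it is an injective cogenerator which is a direct
summand of every injective cogenerator. -/
def IsMinimalInjectiveCogenerator (A : Type u) [Ring A] (E : Type u) [AddCommGroup E]
    [Module A E] : Prop :=
  IsInjectiveCogenerator A E ∧
    ∀ (Q : Type u) [AddCommGroup Q] [Module A Q],
      IsInjectiveCogenerator A Q → IsRetractOf A E Q

/-! ## Bimodules, homotheties, Wakamatsu tilting bimodules -/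

section Bimodules

variable (S R : Type u) [Ring S] [Ring R]
variable (T : Type u) [AddCommGroup T] [Module S T] [Module Rᵐᵒᵖ T] [SMulCommClass S Rᵐᵒᵖ T]

/-- The natural map `S → End(T_R)` given by the left `S`-action. -/
def leftHomothety : S → (T →ₗ[Rᵐᵒᵖ] T) := fun s =>
  { toFun := fun t => s • t
    map_add' := fun t t' => smul_add s t t'
    map_smul' := fun ρ t => smul_comm s ρ t }

/-- The natural map `R → End(_S T)` given by the right `R`-action. -/
def rightHomothety : R → (T →ₗ[S] T) := fun r =>
  { toFun := fun t => op r • t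
    map_add' := fun t t' => smul_add (op r) t t'
    map_smul' := fun s t => (smul_comm s (op r) t).symm }

/-- A Wakamatsu tilting `(S, R)`-bimodule: `T` admits resolutions by finitely generated
projectives on both sides, the natural maps `S → End(T_R)` and `R → End(_S T)` are
isomorphisms, and `Ext^i(T, T) = 0` on both sides for all `i ≥ 1`. -/
structure IsWakamatsuTilting : Prop where
  fgProjResR : HasFGProjResolution Rᵐᵒᵖ T
  fgProjResS : HasFGProjResolution S T
  bijS : Function.Bijective (leftHomothety S R T)
  bijR : Function.Bijective (rightHomothety S R T)
  extR : ExtVanishAll Rᵐᵒᵖ T T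
  extS : ExtVanishAll S T T

/-- An `(S, R)`-bimodule `T` is tensorly faithful if `T ⊗_R M = 0` implies `M = 0` and
`N ⊗_S T = 0` implies `N = 0`. -/
def IsTensorlyFaithful : Prop :=
  (∀ (M : Type u) [AddCommGroup M] [Module R M],
      Subsingleton (MTensor R T M) → Subsingleton M) ∧
  (∀ (N : Type u) [AddCommGroup N] [Module Sᵐᵒᵖ N],
      Subsingleton (MTensor S N T) → Subsingleton N)

/-- Membership in the Auslander class `𝒜_T(S)`. -/
structure InAuslanderClass (N : Type u) [AddCommGroup N] [Module Sᵐᵒᵖ N] : Prop where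
  torVanish : TorVanishAll S N T
  extVanish : ExtVanishAll Rᵐᵒᵖ T (MTensor S N T)
  thetaBij : Function.Bijective (MTensor.thetaFun S N T R)

/-- Membership in the Bass class `ℬ_T(R)`. -/
structure InBassClass (M : Type u) [AddCommGroup M] [Module Rᵐᵒᵖ M] : Prop where
  extVanish : ExtVanishAll Rᵐᵒᵖ T M
  torVanish : TorVanishAll S (T →ₗ[Rᵐᵒᵖ] M) T
  nuBij : Function.Bijective (MTensor.nuFun S R T M)

end Bimodules

/-! ## Cotilting and tilting modules -/

/-- A cotilting right `R`-module (Hügel–Coelho): finite injective dimension,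
`Ext^{i≥1}_R(Cᴵ, C) = 0` for every index set `I`, and there is a finite exact sequence
`0 → C_r → ⋯ → C_0 → Q → 0` with all `C_i ∈ Prod(C)` and `Q` an injective cogenerator. -/
structure IsCotilting (R : Type u) [Ring R] (C : Type u) [AddCommGroup C] [Module Rᵐᵒᵖ C] :
    Prop where
  finInjDim : ∃ n, InjDimLE Rᵐᵒᵖ C n
  extProdVanish : ∀ I : Type u, ExtVanishAll Rᵐᵒᵖ (I → C) C
  coresolution : ∃ (Q : ModuleCat.{u} Rᵐᵒᵖ) (r : ℕ),
    IsInjectiveCogenerator Rᵐᵒᵖ Q ∧ HasClassResolution Rᵐᵒᵖ (InProdClass Rᵐᵒᵖ C) r Q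

/-- An `n`-tilting right `R`-module (Miyashita). -/
structure IsNTilting (R : Type u) [Ring R] (T : Type u) [AddCommGroup T] [Module Rᵐᵒᵖ T]
    (n : ℕ) : Prop where
  fgProjRes : HasFGProjResolution Rᵐᵒᵖ T
  projDim : ProjDimLE Rᵐᵒᵖ T n
  extVanish : ExtVanishAll Rᵐᵒᵖ T T
  coresolution : HasClassCoresolution Rᵐᵒᵖ (InFinAddClass Rᵐᵒᵖ T) n (ModuleCat.of Rᵐᵒᵖ R)

/-- The data of a coresolution `0 → R → P 0 → P 1 → ⋯` of right `R`-modules. -/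
structure WakamatsuCoresolutionData (R : Type u) [Ring R] : Type (u + 1) where
  P : ℕ → Type u
  [instAdd : ∀ n, AddCommGroup (P n)]
  [instMod : ∀ n, Module Rᵐᵒᵖ (P n)]
  f0 : R →ₗ[Rᵐᵒᵖ] P 0
  d : ∀ n, P n →ₗ[Rᵐᵒᵖ] P (n + 1)

attribute [instance] WakamatsuCoresolutionData.instAdd WakamatsuCoresolutionData.instMod

/-- A Wakamatsu tilting right `R`-module: it admits a resolution by finitely generated
projective right `R`-modules, `Ext^{i≥1}_R(T, T) = 0`, and there is an exact sequence
`0 → R → T^0 → T^1 → ⋯` with each `T^i ∈ add(T)` and `Ext^1_R(Coker f, T) = 0` for every map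
`f` in this sequence. -/
def IsWakamatsuTiltingModule (R : Type u) [Ring R] (T : Type u) [AddCommGroup T]
    [Module Rᵐᵒᵖ T] : Prop :=
  HasFGProjResolution Rᵐᵒᵖ T ∧ ExtVanishAll Rᵐᵒᵖ T T ∧
    ∃ W : WakamatsuCoresolutionData R,
      Function.Injective W.f0 ∧ Function.Exact W.f0 (W.d 0) ∧
      (∀ n, Function.Exact (W.d n) (W.d (n + 1))) ∧
      (∀ n, InFinAddClass Rᵐᵒᵖ T (ModuleCat.of Rᵐᵒᵖ (W.P n))) ∧
      Ext1Vanishes Rᵐᵒᵖ ((W.P 0) ⧸ LinearMap.range W.f0) T ∧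
      (∀ n, Ext1Vanishes Rᵐᵒᵖ ((W.P (n + 1)) ⧸ LinearMap.range (W.d n)) T)

/-!
Embed a module `L` of finite injective dimension into an injective module `I` whose cokernel again
has finite injective dimension. Since `Ext¹(I / L, M) = 0`, every map `L → M` extends to `I`, so a
precover of `M` by injective modules already lifts all maps from modules of finite injective
dimension.

A precover by injective modules exists over a Noetherian ring because every nonzero injective module
contains a nonzero injective submodule of size bounded in terms of the ring. By Zorn's lemma and the
injectivity of direct sums, every injective module is then a direct sum of such small ones, and the
precover is the direct sum of all small injective modules, one copy for each map to `M`.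
-/

section Baer

variable {A : Type*} [Ring A]

theorem baer_of_subsingleton (I : Type*) [AddCommGroup I] [Module A I] [Subsingleton I] :
    Module.Baer A I :=
  fun _ _ ↦ ⟨0, fun _ _ ↦ Subsingleton.elim _ _⟩

theorem baer_of_leftInverse {P Q : Type*} [AddCommGroup P] [Module A P] [AddCommGroup Q]
    [Module A Q] (i : P →ₗ[A] Q) (r : Q →ₗ[A] P) (hri : LeftInverse r i) (hQ : Module.Baer A Q) :
    Module.Baer A P := by
  intro J φ
  obtain ⟨ψ, hψ⟩ := hQ J (i ∘ₗ φ)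
  exact ⟨r ∘ₗ ψ, fun x hx ↦ by simp only [LinearMap.comp_apply, hψ x hx, hri (φ _)]⟩

theorem baer_of_isCompl {I : Type*} [AddCommGroup I] [Module A I] {P Q : Submodule A I}
    (hI : Module.Baer A I) (hPQ : IsCompl P Q) : Module.Baer A Q :=
  baer_of_leftInverse Q.subtype (Q.projectionOnto P hPQ.symm)
    (Submodule.projectionOnto_apply_left hPQ.symm) hI

theorem exists_isCompl_of_baer {I : Type*} [AddCommGroup I] [Module A I] {P : Submodule A I}
    (hP : Module.Baer A P) : ∃ Q, IsCompl P Q := by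
  obtain ⟨r, hr⟩ := hP.extension_property P.subtype P.injective_subtype LinearMap.id
  exact ⟨LinearMap.ker r, LinearMap.isCompl_of_proj (LinearMap.congr_fun hr)⟩

theorem exists_finset_support_subset {B ι : Type*} [AddCommGroup B] [Module A B]
    [Module.Finite A B] [DecidableEq ι] {N : ι → Type*} [∀ i, AddCommGroup (N i)]
    [∀ i, Module A (N i)] [∀ i (x : N i), Decidable (x ≠ 0)] (φ : B →ₗ[A] Π₀ i, N i) :
    ∃ s : Finset ι, ∀ x, (φ x).support ⊆ s := by
  obtain ⟨S, hS⟩ := Module.Finite.fg_top (R := A) (M := B)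
  refine ⟨S.biUnion fun x ↦ (φ x).support, fun x i hi ↦ ?_⟩
  by_contra his
  have hspan : Submodule.span A (S : Set B) ≤ LinearMap.ker (DFinsupp.lapply i ∘ₗ φ) := by
    refine Submodule.span_le.2 fun y hy ↦ ?_
    by_contra hne
    exact his (Finset.mem_biUnion.2 ⟨y, hy, DFinsupp.mem_support_iff.2 hne⟩)
  exact DFinsupp.mem_support_iff.1 hi (hspan (hS ▸ Submodule.mem_top))

theorem baer_dfinsupp [IsNoetherianRing A] {ι : Type*} {N : ι → Type*}
    [∀ i, AddCommGroup (N i)] [∀ i, Module A (N i)] (hN : ∀ i, Module.Baer A (N i)) :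
    Module.Baer A (Π₀ i, N i) := by
  classical
  intro J φ
  obtain ⟨s, hs⟩ := exists_finset_support_subset φ
  choose ψ hψ using fun i ↦ hN i J (DFinsupp.lapply i ∘ₗ φ)
  refine ⟨LinearMap.toSpanSingleton A _ (DFinsupp.mk s fun i ↦ ψ i 1), fun x hx ↦ ?_⟩
  ext i
  by_cases hi : i ∈ s
  · calc x • DFinsupp.mk s (fun i ↦ ψ i 1) i
        = ψ i x := by rw [DFinsupp.mk_of_mem hi, ← map_smul, smul_eq_mul, mul_one]
      _ = φ ⟨x, hx⟩ i := hψ i x hx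
  · have hφ : φ ⟨x, hx⟩ i = 0 := DFinsupp.notMem_support_iff.1 fun h ↦ hi (hs _ h)
    simp [hi, hφ]

theorem baer_iSup_of_iSupIndep [IsNoetherianRing A] {ι I : Type*} [AddCommGroup I] [Module A I]
    {p : ι → Submodule A I} (hp : iSupIndep p) (hbaer : ∀ i, Module.Baer A (p i)) :
    Module.Baer A (⨆ i, p i : Submodule A I) := by
  classical
  rw [Submodule.iSup_eq_range_dfinsupp_lsum]
  exact (baer_dfinsupp hbaer).of_equiv (LinearEquiv.ofInjective _ hp.dfinsupp_lsum_injective)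

end Baer

section Decomposition

theorem sSupIndep_insert_of_disjoint {α : Type*} [CompleteLattice α] [IsModularLattice α]
    {s : Set α} {a : α} (hs : sSupIndep s) (ha : Disjoint a (sSup s)) :
    sSupIndep (insert a s) := by
  intro x hx
  obtain rfl | hxa := eq_or_ne x a
  · rw [Set.insert_sdiff_of_mem _ (Set.mem_singleton x)]
    exact ha.mono_right (sSup_le_sSup Set.sdiff_subset)
  · have hxs : x ∈ s := hx.resolve_left hxa
    rw [Set.insert_sdiff_of_notMem _ (by simpa using hxa.symm), sSup_insert, sup_comm]
    exact (hs hxs).disjoint_sup_right_of_disjoint_sup_left <|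
      ha.symm.mono_left (sup_le (le_sSup hxs) (sSup_le_sSup Set.sdiff_subset))

variable {A : Type*} [Ring A] {I : Type*} [AddCommGroup I] [Module A I]

theorem exists_sSupIndep_sSup_eq_top_of_baer [IsNoetherianRing A] (hI : Module.Baer A I)
    {𝒮 : Set (Submodule A I)} (hbaer : ∀ N ∈ 𝒮, Module.Baer A N)
    (hexists : ∀ Q : Submodule A I, Module.Baer A Q → Q ≠ ⊥ → ∃ N ∈ 𝒮, N ≠ ⊥ ∧ N ≤ Q) :
    ∃ s ⊆ 𝒮, sSupIndep s ∧ sSup s = ⊤ := by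
  obtain ⟨s, hs⟩ := zorn_subset {s | s ⊆ 𝒮 ∧ sSupIndep s} fun c hc hchain ↦
    ⟨⋃₀ c, ⟨Set.sUnion_subset fun t ht ↦ (hc ht).1,
      iSupIndep_sUnion_of_directed hchain.directedOn fun t ht ↦ (hc ht).2⟩,
      fun _ ↦ Set.subset_sUnion_of_mem⟩
  obtain ⟨hs𝒮, hind⟩ := hs.prop
  have hsup : Module.Baer A (sSup s : Submodule A I) := by
    rw [sSup_eq_iSup']
    exact baer_iSup_of_iSupIndep ((sSupIndep_iff s).1 hind) fun N ↦ hbaer N (hs𝒮 N.2)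
  obtain ⟨Q, hQ⟩ := exists_isCompl_of_baer hsup
  refine ⟨s, hs𝒮, hind, ?_⟩
  suffices Q = ⊥ by simpa [this] using hQ.sup_eq_top
  by_contra hQne
  obtain ⟨N, hN𝒮, hNne, hNQ⟩ := hexists Q (baer_of_isCompl hI hQ) hQne
  have hdisj : Disjoint N (sSup s) := hQ.symm.disjoint.mono_left hNQ
  have hNs : N ∈ s := hs.le_of_ge
    ⟨Set.insert_subset hN𝒮 hs𝒮, sSupIndep_insert_of_disjoint hind hdisj⟩
    (Set.subset_insert N s) (Set.mem_insert N s)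
  exact hNne (hdisj.eq_bot_of_le (le_sSup hNs))

theorem exists_comp_eq_of_iSupIndep {ι E M : Type*} [AddCommGroup E] [Module A E]
    [AddCommGroup M] [Module A M] {p : ι → Submodule A I} (hp : iSupIndep p)
    (htop : ⨆ i, p i = ⊤) (f : E →ₗ[A] M) (g : I →ₗ[A] M)
    (hfactor : ∀ i, ∃ h : p i →ₗ[A] E, f ∘ₗ h = g ∘ₗ (p i).subtype) :
    ∃ h : I →ₗ[A] E, f ∘ₗ h = g := by
  classical
  choose h hh using hfactor
  let e := hp.linearEquiv htop
  refine ⟨DFinsupp.lsum ℕ h ∘ₗ e.symm.toLinearMap, ?_⟩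
  rw [← LinearMap.comp_assoc, LinearEquiv.comp_toLinearMap_symm_eq]
  refine DFinsupp.lhom_ext fun i x ↦ ?_
  simpa [e] using LinearMap.congr_fun (hh i) x

end Decomposition

section BaerClosure

/-- Formal expressions in one generator, built from addition, scalar multiplication and solutions
`y` of the systems `a • y = t a` (`a ∈ J`), one for each left ideal `J`. They form a type
depending only on the ring, which bounds the size of `baerClosure`. -/
inductive BaerTerm (A : Type*) [Ring A]
  | gen : BaerTerm A
  | add : BaerTerm A → BaerTerm A → BaerTerm A
  | smul : A → BaerTerm A → BaerTerm A
  | solve : (J : Ideal A) → (J → BaerTerm A) → BaerTerm A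

variable {A : Type*} [Ring A] {I : Type*} [AddCommGroup I] [Module A I]

/-- The value of a formal expression when the generator is sent to `x`. A system without a solution
gets an arbitrary value. -/
def BaerTerm.value (x : I) : BaerTerm A → I
  | gen => x
  | add s t => s.value x + t.value x
  | smul a t => a • t.value x
  | solve J t => Classical.epsilon fun y : I ↦ ∀ a : J, (a : A) • y = (t a).value x

variable (A) in
/-- The submodule of all values of formal expressions at `x`: a submodule of an injective module
containing `x` which is again injective, and whose size is bounded in terms of `A` alone. -/
def baerClosure (x : I) : Submodule A I where
  carrier := Set.range (BaerTerm.value (A := A) x)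
  add_mem' := by
    rintro _ _ ⟨s, rfl⟩ ⟨t, rfl⟩
    exact ⟨s.add t, rfl⟩
  zero_mem' := ⟨BaerTerm.gen.smul 0, zero_smul A x⟩
  smul_mem' := by
    rintro a _ ⟨t, rfl⟩
    exact ⟨t.smul a, rfl⟩

theorem mem_baerClosure_self (x : I) : x ∈ baerClosure A x :=
  ⟨BaerTerm.gen, rfl⟩

theorem baer_baerClosure (hI : Module.Baer A I) (x : I) : Module.Baer A (baerClosure A x) := by
  intro J φ
  choose t ht using fun a ↦ (φ a).2
  have hsolvable : ∃ y : I, ∀ a : J, (a : A) • y = (t a).value x := by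
    obtain ⟨ψ, hψ⟩ := hI J ((baerClosure A x).subtype ∘ₗ φ)
    refine ⟨ψ 1, fun a ↦ ?_⟩
    rw [← map_smul, smul_eq_mul, mul_one, hψ a a.2, ht]
    rfl
  have hsolve (a : J) : (a : A) • (BaerTerm.solve J t).value x = φ a :=
    (Classical.epsilon_spec hsolvable a).trans (ht a)
  exact ⟨LinearMap.toSpanSingleton A _ ⟨_, BaerTerm.solve J t, rfl⟩,
    fun a ha ↦ Subtype.ext (hsolve ⟨a, ha⟩)⟩

theorem exists_quotient_equiv_baerClosure (x : I) :
    ∃ S : Submodule A (BaerTerm A →₀ A), Nonempty ((_ ⧸ S) ≃ₗ[A] baerClosure A x) := by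
  let v : BaerTerm A → baerClosure A x := fun t ↦ ⟨t.value x, t, rfl⟩
  have hv : Surjective (Finsupp.linearCombination A v) := by
    rintro ⟨_, t, rfl⟩
    exact ⟨Finsupp.single t 1, by simp [v]⟩
  exact ⟨_, ⟨LinearMap.quotKerEquivOfSurjective _ hv⟩⟩

theorem exists_baer_quotient_equiv_le {Q : Submodule A I} (hQ : Module.Baer A Q) (hne : Q ≠ ⊥) :
    ∃ N ≤ Q, N ≠ ⊥ ∧ Module.Baer A N ∧
      ∃ S : Submodule A (BaerTerm A →₀ A), Nonempty ((_ ⧸ S) ≃ₗ[A] N) := by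
  obtain ⟨x, hxQ, hx⟩ := Q.exists_mem_ne_zero_of_ne_bot hne
  let C := baerClosure A (⟨x, hxQ⟩ : Q)
  let e : C ≃ₗ[A] C.map Q.subtype := Q.equivSubtypeMap C
  obtain ⟨S, ⟨q⟩⟩ := exists_quotient_equiv_baerClosure (A := A) (⟨x, hxQ⟩ : Q)
  have hxC : x ∈ C.map Q.subtype := ⟨⟨x, hxQ⟩, mem_baerClosure_self _, rfl⟩
  exact ⟨C.map Q.subtype, Submodule.map_subtype_le Q C, Submodule.ne_bot_iff _ |>.2 ⟨x, hxC, hx⟩,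
    (baer_baerClosure hQ _).of_equiv e, S, ⟨q.trans e⟩⟩

end BaerClosure

section Precover

universe v w

variable (A : Type u) [Ring A] [IsNoetherianRing A] (M : Type v) [AddCommGroup M] [Module A M]

theorem exists_baer_forall_comp_eq {κ : Type w} (P : κ → Type w) [∀ k, AddCommGroup (P k)]
    [∀ k, Module A (P k)] (hP : ∀ k, Module.Baer A (P k)) :
    ∃ (E : ModuleCat.{max w v} A) (f : E →ₗ[A] M), Module.Baer A E ∧
      ∀ k (g : P k →ₗ[A] M), ∃ h : P k →ₗ[A] E, f ∘ₗ h = g := by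
  classical
  let ι := Σ k, P k →ₗ[A] M
  let f : (Π₀ i : ι, P i.1) →ₗ[A] M := DFinsupp.lsum ℕ fun i ↦ i.2
  refine ⟨ModuleCat.of A (Π₀ i : ι, P i.1), f, baer_dfinsupp fun i ↦ hP i.1, fun k g ↦ ?_⟩
  exact ⟨DFinsupp.lsingle (M := fun i : ι ↦ P i.1) ⟨k, g⟩, LinearMap.ext fun y ↦ by simp [f]⟩

theorem exists_baer_precover :
    ∃ (E : ModuleCat.{max u v} A) (f : E →ₗ[A] M), Module.Baer A E ∧
      ∀ (I : Type w) [AddCommGroup I] [Module A I], Module.Baer A I →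
        ∀ g : I →ₗ[A] M, ∃ h : I →ₗ[A] E, f ∘ₗ h = g := by
  let κ := {S : Submodule A (BaerTerm A →₀ A) // Module.Baer A (_ ⧸ S)}
  obtain ⟨E, f, hE, hf⟩ := exists_baer_forall_comp_eq A M (fun S : κ ↦ _ ⧸ S.1) fun S ↦ S.2
  refine ⟨E, f, hE, fun I _ _ hI g ↦ ?_⟩
  let 𝒮 : Set (Submodule A I) := {N | Module.Baer A N ∧
    ∃ S : Submodule A (BaerTerm A →₀ A), Nonempty ((_ ⧸ S) ≃ₗ[A] N)}
  obtain ⟨s, hs𝒮, hind, htop⟩ := exists_sSupIndep_sSup_eq_top_of_baer (𝒮 := 𝒮) hI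
    (fun N hN ↦ hN.1) fun Q hQ hne ↦
      let ⟨N, hNQ, hNne, hN⟩ := exists_baer_quotient_equiv_le hQ hne
      ⟨N, hN, hNne, hNQ⟩
  refine exists_comp_eq_of_iSupIndep ((sSupIndep_iff s).1 hind)
    ((sSup_eq_iSup' s).symm.trans htop) f g fun N ↦ ?_
  obtain ⟨hN, S, ⟨e⟩⟩ := hs𝒮 N.2
  obtain ⟨h, hh⟩ := hf ⟨S, hN.of_equiv e.symm⟩ (g ∘ₗ N.1.subtype ∘ₗ e.toLinearMap)
  exact ⟨h ∘ₗ e.symm.toLinearMap, LinearMap.ext fun y ↦ by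
    simpa using LinearMap.congr_fun hh (e.symm y)⟩

end Precover

section Ext

variable {A : Type u} [Ring A]

theorem ExtVanishAll.ext1Vanishes {X Y : Type u} [AddCommGroup X] [Module A X] [AddCommGroup Y]
    [Module A Y] (hext : ExtVanishAll A X Y) : Ext1Vanishes A X Y := by
  intro E _ _ i p hi hp hip
  obtain ⟨Q, hQ, hexact⟩ := hext
  have := hQ.proj
  obtain ⟨α, hα⟩ := Module.projective_lifting_property p Q.ε hp
  have hαd (x) : α (Q.d 0 x) ∈ LinearMap.range i := by
    rw [← LinearMap.exact_iff.1 hip, LinearMap.mem_ker, ← LinearMap.comp_apply, hα,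
      hQ.exact0.apply_apply_eq_zero]
  let β : Q.P 1 →ₗ[A] Y := (LinearEquiv.ofInjective i hi).symm.toLinearMap ∘ₗ
    (α ∘ₗ Q.d 0).codRestrict (LinearMap.range i) hαd
  have hβ : i ∘ₗ β = α ∘ₗ Q.d 0 := LinearMap.ext fun x ↦
    congrArg Subtype.val ((LinearEquiv.ofInjective i hi).apply_symm_apply ⟨_, hαd x⟩)
  have hβd : β ∘ₗ Q.d 1 = 0 := by
    rw [← LinearMap.cancel_left hi, ← LinearMap.comp_assoc, hβ, LinearMap.comp_assoc,
      (hQ.exactSucc 0).linearMap_comp_eq_zero, LinearMap.comp_zero, LinearMap.comp_zero]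
  obtain ⟨γ, hγ : γ ∘ₗ Q.d 0 = β⟩ := (hexact 0 β).1 hβd
  have hker : LinearMap.ker Q.ε ≤ LinearMap.ker (α - i ∘ₗ γ) := by
    rw [LinearMap.exact_iff.1 hQ.exact0, LinearMap.range_le_ker_iff, LinearMap.sub_comp,
      LinearMap.comp_assoc, hγ, hβ, sub_self]
  let e := Q.ε.quotKerEquivOfSurjective hQ.surj
  refine ⟨(LinearMap.ker Q.ε).liftQ _ hker ∘ₗ e.symm.toLinearMap, ?_⟩
  rw [← LinearMap.comp_assoc, LinearEquiv.comp_toLinearMap_symm_eq]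
  refine Submodule.linearMap_qext _ (LinearMap.ext fun x ↦ ?_)
  have hpα : p (α x) = Q.ε x := LinearMap.congr_fun hα x
  simp [e, hpα, hip.apply_apply_eq_zero]

theorem Ext1Vanishes.exists_extension {L I C M : Type u} [AddCommGroup L] [Module A L]
    [AddCommGroup I] [Module A I] [AddCommGroup C] [Module A C] [AddCommGroup M] [Module A M]
    (hext : Ext1Vanishes A C M) {i : L →ₗ[A] I} {p : I →ₗ[A] C} (hi : Injective i)
    (hp : Surjective p) (hip : Exact i p) (g : L →ₗ[A] M) : ∃ g' : I →ₗ[A] M, g' ∘ₗ i = g := by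
  -- The pushout of `0 → L → I → C → 0` along `g` splits.
  let K : Submodule A (M × I) := LinearMap.range (g.prod (-i))
  let j : M →ₗ[A] (M × I) ⧸ K := K.mkQ ∘ₗ LinearMap.inl A M I
  have hpK : K ≤ LinearMap.ker (p ∘ₗ LinearMap.snd A M I) := by
    rintro _ ⟨l, rfl⟩
    simp [hip.apply_apply_eq_zero]
  let π : (M × I) ⧸ K →ₗ[A] C := K.liftQ (p ∘ₗ LinearMap.snd A M I) hpK
  have hglue (l : L) : K.mkQ (0, i l) = j (g l) :=
    ((Submodule.Quotient.eq K).2 ⟨l, by simp⟩).symm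
  have hj : Injective j := by
    refine (injective_iff_map_eq_zero j).2 fun m hm ↦ ?_
    obtain ⟨l, hl⟩ := (Submodule.Quotient.mk_eq_zero K).1 hm
    obtain ⟨hgl, hil⟩ := Prod.ext_iff.1 hl
    have hl0 : l = 0 := (map_eq_zero_iff i hi).1 (by simpa using hil)
    simpa [hl0] using hgl.symm
  have hπ : Surjective π := fun c ↦
    let ⟨x, hx⟩ := hp c
    ⟨K.mkQ (0, x), hx⟩
  have hjπ : Exact j π := by
    refine LinearMap.exact_of_comp_of_mem_range (LinearMap.ext fun m ↦ by simp [j, π]) fun y hy ↦ ?_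
    obtain ⟨⟨m, x⟩, rfl⟩ := K.mkQ_surjective y
    obtain ⟨l, rfl⟩ := (hip x).1 hy
    exact ⟨m + g l, by rw [map_add, ← hglue]; simp [j, ← Submodule.Quotient.mk_add]⟩
  obtain ⟨r, hr⟩ := ((hjπ.split_tfae hj hπ).out 0 1).1 (hext _ j π hj hπ hjπ)
  refine ⟨r ∘ₗ K.mkQ ∘ₗ LinearMap.inr A M I, LinearMap.ext fun l ↦ ?_⟩
  exact (congrArg r (hglue l)).trans (LinearMap.congr_fun hr (g l))

theorem InjDimLE.exists_injective_embedding {L : Type u} [AddCommGroup L] [Module A L] {n : ℕ}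
    (hL : InjDimLE A L n) :
    ∃ (I : ModuleCat.{u} A) (i : L →ₗ[A] I), Module.Injective A I ∧ Injective i ∧
      ∃ m, InjDimLE A (I ⧸ LinearMap.range i) m := by
  cases n with
  | zero =>
    have : Subsingleton (L ⧸ LinearMap.range (LinearMap.id : L →ₗ[A] L)) := by
      rw [LinearMap.range_id]
      infer_instance
    exact ⟨ModuleCat.of A L, LinearMap.id, hL, injective_id, 0, (baer_of_subsingleton _).injective⟩
  | succ m =>
    obtain ⟨e, hI, hcoker⟩ := hL
    exact ⟨e.E, e.f, hI, e.inj, m, hcoker⟩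

end Ext

theorem IsRightNoetherianRing.isNoetherianRing {R : Type u} [Ring R]
    (hR : IsRightNoetherianRing R) : IsNoetherianRing Rᵐᵒᵖ :=
  have : IsNoetherian Rᵐᵒᵖ R := ⟨hR⟩
  isNoetherian_of_linearEquiv (opLinearEquiv Rᵐᵒᵖ : R ≃ₗ[Rᵐᵒᵖ] Rᵐᵒᵖ)

theorem exists_injective_precover_of_ext_vanishing_general (A : Type u) [Ring A]
    [IsNoetherianRing A] (M : Type u) [AddCommGroup M] [Module A M]
    (hext : ∀ (L : Type u) [AddCommGroup L] [Module A L],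
      (∃ n, InjDimLE A L n) → Ext1Vanishes A L M) :
    ∃ (E : ModuleCat.{u} A) (f : E →ₗ[A] M),
      Module.Injective A E ∧ (∃ n, InjDimLE A E n) ∧
      ∀ (L : Type u) [AddCommGroup L] [Module A L], (∃ n, InjDimLE A L n) →
        ∀ g : L →ₗ[A] M, ∃ h : L →ₗ[A] E, f ∘ₗ h = g := by
  obtain ⟨E, f, hE, hf⟩ := exists_baer_precover.{u, u, u} A M
  refine ⟨E, f, hE.injective, ⟨0, hE.injective⟩, fun L _ _ ⟨_, hL⟩ g ↦ ?_⟩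
  obtain ⟨I, i, hI, hi, hcoker⟩ := hL.exists_injective_embedding
  obtain ⟨g', hg'⟩ := (hext _ hcoker).exists_extension hi (Submodule.mkQ_surjective _)
    (LinearMap.exact_map_mkQ_range i) g
  obtain ⟨h, hh⟩ := hf I (Module.Baer.of_injective hI) g'
  exact ⟨h ∘ₗ i, by rw [← LinearMap.comp_assoc, hh, hg']⟩

/-- Let `R` be a right Noetherian ring and `M` a right `R`-module, and let
`ℰ` be the class of right `R`-modules of finite injective dimension. If `Ext^{i≥1}_R(L, M) = 0`
for all `L ∈ ℰ` then `M` has an `ℰ`-precover `f : E → M` with `E` injective. -/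
theorem exists_injective_precover_of_ext_vanishing
    (R : Type u) [Ring R] (hRnoeth : IsRightNoetherianRing R)
    (M : Type u) [AddCommGroup M] [Module Rᵐᵒᵖ M]
    (hext : ∀ (L : Type u) [AddCommGroup L] [Module Rᵐᵒᵖ L],
      (∃ n, InjDimLE Rᵐᵒᵖ L n) → ExtVanishAll Rᵐᵒᵖ L M) :
    ∃ (E : ModuleCat.{u} Rᵐᵒᵖ) (f : (E : Type u) →ₗ[Rᵐᵒᵖ] M),
      Module.Injective Rᵐᵒᵖ E ∧ (∃ n, InjDimLE Rᵐᵒᵖ E n) ∧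
      ∀ (L : Type u) [AddCommGroup L] [Module Rᵐᵒᵖ L], (∃ n, InjDimLE Rᵐᵒᵖ L n) →
        ∀ g : L →ₗ[Rᵐᵒᵖ] M, ∃ h : L →ₗ[Rᵐᵒᵖ] (E : Type u), f.comp h = g := by
  have := hRnoeth.isNoetherianRing
  exact exists_injective_precover_of_ext_vanishing_general Rᵐᵒᵖ M fun L _ _ hL ↦
    (hext L hL).ext1Vanishes
end
end

section
/- Let T be a Wakamatsu tilting (S,R)-bimodule and M a Gorenstein injective right R-module. If either the projective dimension of T as a right R-module is finite, or the injective dimension of T as a right R-module is finite, then M belongs to the Bass class ℬ_T(R). (In particular, no tensorly-faithfulness assumption on T is needed.) -/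
open Function MulOpposite

universe u

noncomputable section

/-!
Write `X⁺` for the character module of `X`. Under `(Hom_R(T, M) ⊗_S T)⁺ ≃ Hom_S(T, Hom_R(T, M)⁺)`
the dual of the evaluation map `ν_M` becomes a natural map `M⁺ → Hom_S(T, Hom_R(T, M)⁺)`, and the
vanishing of `Tor^S_i(Hom_R(T, M), T)` becomes that of `Ext^i_S(T, Hom_R(T, M)⁺)`. For an injective
module `E` both conditions follow by applying `Hom_R(-, E)⁺` to a resolution of `_S T` by finitely
generated projectives, because `R ≃ End_S(T)` and `Ext^i_S(T, T) = 0`.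

Let `M` be a cocycle module of an exact complex of injectives that stays exact under `Hom_R(I, -)`
for every injective `I`. Finiteness of either dimension of `T_R` makes `Ext^i_R(T, K)` vanish for
every cocycle module `K` and `i > 0`. Hence `Hom_R(T, -)⁺` keeps the sequences `0 → K → E → K' → 0`
of cocycle modules exact, and diagram chases along them carry the two conditions from the injective
terms `E` to the cocycle modules, injectivity of `ν_M⁺` first, then surjectivity, then the `Ext`
groups one degree at a time.
-/

/-! ## Vanishing of `Ext` -/

section HomExact

variable {A X₁ X₂ X₃ : Type*} [Ring A] [AddCommGroup X₁] [Module A X₁] [AddCommGroup X₂]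
  [Module A X₂] [AddCommGroup X₃] [Module A X₃] {f : X₁ →ₗ[A] X₂} {g : X₂ →ₗ[A] X₃}
  (Y : Type*) [AddCommGroup Y] [Module A Y]

theorem exact_lcomp (hfg : Exact f g) (hg : Surjective g) :
    Exact (LinearMap.lcomp ℤ Y g) (LinearMap.lcomp ℤ Y f) := by
  refine fun φ => ⟨fun hφ => ?_, ?_⟩
  · have hker : LinearMap.range f ≤ LinearMap.ker φ := LinearMap.range_le_ker_iff.2 hφ
    let e := hfg.linearEquivOfSurjective hg
    refine ⟨(Submodule.liftQ _ φ hker).comp e.symm.toLinearMap, LinearMap.ext fun x => ?_⟩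
    have hx : e.symm (g x) = Submodule.Quotient.mk x := e.symm_apply_apply (Submodule.Quotient.mk x)
    simp only [LinearMap.lcomp_apply, LinearMap.comp_apply, LinearEquiv.coe_coe, hx,
      Submodule.liftQ_apply]
  · rintro ⟨ψ, rfl⟩
    exact LinearMap.ext fun x => by simp [hfg.apply_apply_eq_zero]

theorem exact_compRight (hf : Injective f) (hfg : Exact f g) :
    Exact (LinearMap.compRight ℤ f : (Y →ₗ[A] X₁) →ₗ[ℤ] _) (LinearMap.compRight ℤ g) := by
  refine fun φ => ⟨fun hφ => ?_, ?_⟩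
  · have hrange (y : Y) : φ y ∈ LinearMap.range f := (hfg (φ y)).1 (LinearMap.congr_fun hφ y)
    let e := LinearEquiv.ofInjective f hf
    exact ⟨e.symm.toLinearMap.comp (φ.codRestrict _ hrange), LinearMap.ext fun y =>
      congrArg Subtype.val (e.apply_symm_apply ⟨φ y, hrange y⟩)⟩
  · rintro ⟨ψ, rfl⟩
    exact LinearMap.ext fun y => hfg.apply_apply_eq_zero (ψ y)

end HomExact

section ExtVanishing

open CategoryTheory Abelian

theorem shortExact_of_exact {A X₁ X₂ X₃ : Type u} [Ring A] [AddCommGroup X₁] [Module A X₁]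
    [AddCommGroup X₂] [Module A X₂] [AddCommGroup X₃] [Module A X₃] {f : X₁ →ₗ[A] X₂}
    {g : X₂ →ₗ[A] X₃} (hf : Injective f) (hfg : Exact f g) (hg : Surjective g) :
    (ModuleCat.shortComplexOfCompEqZero f g hfg.linearMap_comp_eq_zero).ShortExact where
  exact := (ShortComplex.ShortExact.moduleCat_exact_iff_function_exact _).2 hfg
  mono_f := (ModuleCat.mono_iff_injective _).2 hf
  epi_g := (ModuleCat.epi_iff_surjective _).2 hg

/-- `Ext^n_A(X, Y) = 0` for Mathlib's `Ext`, whose long exact sequences give dimension shifting;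
`ExtVanishAll` is the conjunction over all `n ≥ 1`. -/
def ExtVanishes (A : Type u) [Ring A] (X Y : Type u) [AddCommGroup X] [Module A X]
    [AddCommGroup Y] [Module A Y] (n : ℕ) : Prop :=
  Subsingleton (Ext.{u} (ModuleCat.of A X) (ModuleCat.of A Y) n)

namespace ExtVanishes

variable {A : Type u} [Ring A]

section

variable (X Y : Type u) [AddCommGroup X] [Module A X] [AddCommGroup Y] [Module A Y]

theorem of_projective [Module.Projective A X] (n : ℕ) : ExtVanishes A X Y (n + 1) :=
  Ext.subsingleton_of_projective _ _ n

theorem of_injective [Module.Injective A Y] (n : ℕ) : ExtVanishes A X Y (n + 1) :=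
  have := Module.injective_object_of_injective_module A Y
  Ext.subsingleton_of_injective _ _ n

end

section LongExactSequence

variable {X₁ X₂ X₃ : Type u} [AddCommGroup X₁] [Module A X₁] [AddCommGroup X₂] [Module A X₂]
  [AddCommGroup X₃] [Module A X₃] {f : X₁ →ₗ[A] X₂} {g : X₂ →ₗ[A] X₃}

variable (hf : Injective f) (hfg : Exact f g) (hg : Surjective g)
  {Y : Type u} [AddCommGroup Y] [Module A Y] {n : ℕ}

include hf hfg hg

theorem right_of_middle (h₂ : ExtVanishes A Y X₂ n) (h₁ : ExtVanishes A Y X₁ (n + 1)) :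
    ExtVanishes A Y X₃ n := by
  refine subsingleton_of_forall_eq 0 fun x => ?_
  obtain ⟨y, rfl⟩ := Ext.covariant_sequence_exact₃ _ (shortExact_of_exact hf hfg hg) x rfl
    (h₁.elim _ _)
  rw [show y = 0 from h₂.elim _ _, Ext.zero_comp]

theorem left_of_middle (h₃ : ExtVanishes A Y X₃ n) (h₂ : ExtVanishes A Y X₂ (n + 1)) :
    ExtVanishes A Y X₁ (n + 1) := by
  refine subsingleton_of_forall_eq 0 fun x => ?_
  obtain ⟨y, rfl⟩ := Ext.covariant_sequence_exact₁ _ (shortExact_of_exact hf hfg hg) x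
    (h₂.elim _ _) rfl
  rw [show y = 0 from h₃.elim _ _, Ext.zero_comp]

theorem compRight_surjective (h₁ : ExtVanishes A Y X₁ 1) :
    Surjective (LinearMap.compRight ℤ g : (Y →ₗ[A] X₂) →ₗ[ℤ] _) := fun φ => by
  obtain ⟨y, hy⟩ := Ext.covariant_sequence_exact₃ (ModuleCat.of A Y)
    (shortExact_of_exact hf hfg hg) (Ext.mk₀ (ModuleCat.ofHom φ)) rfl (h₁.elim _ _)
  obtain ⟨ψ, rfl⟩ := Ext.addEquiv₀.symm.surjective y
  refine ⟨ψ.hom, ?_⟩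
  rw [Ext.addEquiv₀_symm_apply, Ext.mk₀_comp_mk₀] at hy
  exact congrArg ModuleCat.Hom.hom ((Ext.mk₀_bijective _ _).1 hy)

theorem one_of_compRight_surjective (h₂ : ExtVanishes A Y X₂ 1)
    (h : Surjective (LinearMap.compRight ℤ g : (Y →ₗ[A] X₂) →ₗ[ℤ] _)) :
    ExtVanishes A Y X₁ 1 := by
  refine subsingleton_of_forall_eq 0 fun x => ?_
  have hS := shortExact_of_exact hf hfg hg
  obtain ⟨y, rfl⟩ := Ext.covariant_sequence_exact₁ _ hS x (h₂.elim _ _) rfl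
  obtain ⟨φ, rfl⟩ := Ext.addEquiv₀.symm.surjective y
  obtain ⟨ψ, hψ⟩ := h φ.hom
  have hφ : φ = ModuleCat.ofHom ψ ≫ ModuleCat.ofHom g := ModuleCat.hom_ext hψ.symm
  rw [Ext.addEquiv₀_symm_apply, hφ, ← Ext.mk₀_comp_mk₀, Ext.comp_assoc_of_second_deg_zero,
    hS.comp_extClass, Ext.comp_zero]

theorem right_of_left (h₁ : ExtVanishes A X₁ Y n) (h₂ : ExtVanishes A X₂ Y (n + 1)) :
    ExtVanishes A X₃ Y (n + 1) := by
  refine subsingleton_of_forall_eq 0 fun x => ?_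
  obtain ⟨y, rfl⟩ := Ext.contravariant_sequence_exact₃ (shortExact_of_exact hf hfg hg) _ x
    (h₂.elim _ _) (add_comm 1 n)
  rw [show y = 0 from h₁.elim _ _, Ext.comp_zero]

theorem left_of_right (h₂ : ExtVanishes A X₂ Y n) (h₃ : ExtVanishes A X₃ Y (n + 1)) :
    ExtVanishes A X₁ Y n := by
  refine subsingleton_of_forall_eq 0 fun x => ?_
  obtain ⟨y, rfl⟩ := Ext.contravariant_sequence_exact₁ (shortExact_of_exact hf hfg hg) _ x
    (add_comm 1 n) (h₃.elim _ _)
  rw [show y = 0 from h₂.elim _ _, Ext.comp_zero]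

theorem lcomp_surjective (h₃ : ExtVanishes A X₃ Y 1) : Surjective (LinearMap.lcomp ℤ Y f) :=
    fun φ => by
  obtain ⟨y, hy⟩ := Ext.contravariant_sequence_exact₁ (shortExact_of_exact hf hfg hg)
    (ModuleCat.of A Y) (Ext.mk₀ (ModuleCat.ofHom φ)) rfl (h₃.elim _ _)
  obtain ⟨ψ, rfl⟩ := Ext.addEquiv₀.symm.surjective y
  refine ⟨ψ.hom, ?_⟩
  rw [Ext.addEquiv₀_symm_apply, Ext.mk₀_comp_mk₀] at hy
  exact congrArg ModuleCat.Hom.hom ((Ext.mk₀_bijective _ _).1 hy)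

theorem one_of_lcomp_surjective (h₂ : ExtVanishes A X₂ Y 1)
    (h : Surjective (LinearMap.lcomp ℤ Y f)) : ExtVanishes A X₃ Y 1 := by
  refine subsingleton_of_forall_eq 0 fun x => ?_
  have hS := shortExact_of_exact hf hfg hg
  obtain ⟨y, rfl⟩ := Ext.contravariant_sequence_exact₃ hS _ x (h₂.elim _ _) (add_zero 1)
  obtain ⟨φ, rfl⟩ := Ext.addEquiv₀.symm.surjective y
  obtain ⟨ψ, hψ⟩ := h φ.hom
  have hφ : φ = ModuleCat.ofHom f ≫ ModuleCat.ofHom ψ := ModuleCat.hom_ext hψ.symm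
  rw [Ext.addEquiv₀_symm_apply, hφ, ← Ext.mk₀_comp_mk₀, hS.extClass_comp_assoc]

end LongExactSequence

variable {X Y P₀ P₁ P₂ : Type u} [AddCommGroup X] [Module A X] [AddCommGroup Y] [Module A Y]
  [AddCommGroup P₀] [Module A P₀] [AddCommGroup P₁] [Module A P₁] [AddCommGroup P₂] [Module A P₂]

theorem exact_compRight {ι : Y →ₗ[A] P₀} {d₀ : P₀ →ₗ[A] P₁} {d₁ : P₁ →ₗ[A] P₂}
    (hι : Injective ι) (h₀ : Exact ι d₀) (h₁ : Exact d₀ d₁) (h : ExtVanishes A X Y 1) :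
    Exact (LinearMap.compRight ℤ d₀ : (X →ₗ[A] P₀) →ₗ[ℤ] _) (LinearMap.compRight ℤ d₁) := by
  have hsurj := h.compRight_surjective hι
    ((Submodule.injective_subtype _).comp_exact_iff_exact (g := d₀.rangeRestrict).1 h₀)
    d₀.surjective_rangeRestrict
  have hexact : Exact (LinearMap.range d₀).subtype d₁ :=
    d₀.surjective_rangeRestrict.comp_exact_iff_exact.1 h₁
  exact hsurj.comp_exact_iff_exact.2
    (_root_.exact_compRight X (Submodule.injective_subtype _) hexact)

section Presentation

variable {d₁ : P₂ →ₗ[A] P₁} {d₀ : P₁ →ₗ[A] P₀} {ε : P₀ →ₗ[A] X}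

theorem exact_lcomp (h₁ : Exact d₁ d₀) (h₀ : Exact d₀ ε) (hε : Surjective ε)
    (h : ExtVanishes A X Y 1) : Exact (LinearMap.lcomp ℤ Y d₀) (LinearMap.lcomp ℤ Y d₁) := by
  have hsurj := h.lcomp_surjective (Submodule.injective_subtype _)
    (d₀.surjective_rangeRestrict.comp_exact_iff_exact.1 h₀) hε
  have hexact : Exact d₁ d₀.rangeRestrict :=
    (Submodule.injective_subtype _).comp_exact_iff_exact.1 h₁
  exact hsurj.comp_exact_iff_exact.2 (_root_.exact_lcomp Y hexact d₀.surjective_rangeRestrict)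

theorem one_of_exact_lcomp (h₁ : d₀.comp d₁ = 0) (h₀ : Exact d₀ ε) (hε : Surjective ε)
    (hP₀ : ExtVanishes A P₀ Y 1)
    (h : Exact (LinearMap.lcomp ℤ Y d₀) (LinearMap.lcomp ℤ Y d₁)) : ExtVanishes A X Y 1 := by
  refine one_of_lcomp_surjective (Submodule.injective_subtype (LinearMap.range d₀))
    (d₀.surjective_rangeRestrict.comp_exact_iff_exact.1 h₀) hε hP₀ fun φ => ?_
  have hφ : (φ.comp d₀.rangeRestrict).comp d₁ = 0 := by
    have : d₀.rangeRestrict.comp d₁ = 0 :=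
      LinearMap.ext fun x => Subtype.ext (LinearMap.congr_fun h₁ x)
    rw [LinearMap.comp_assoc, this, LinearMap.comp_zero]
  obtain ⟨ψ, hψ⟩ := (h (φ.comp d₀.rangeRestrict)).1 hφ
  exact ⟨ψ, (LinearMap.cancel_right d₀.surjective_rangeRestrict).1 hψ⟩

end Presentation

end ExtVanishes

end ExtVanishing

section Resolutions

variable {A : Type u} [Ring A]

namespace ResolutionData

variable {X Y : Type u} [AddCommGroup X] [Module A X] [AddCommGroup Y] [Module A Y]

/-- The first syzygy of `X`, with the resolution obtained by deleting the term `P 0`; it allows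
induction along a resolution. -/
def syzygy (Q : ResolutionData A X) : ResolutionData A (LinearMap.range (Q.d 0)) where
  P n := Q.P (n + 1)
  d n := Q.d (n + 1)
  ε := (Q.d 0).rangeRestrict

namespace IsProjResolution

variable {Q : ResolutionData A X} (hQ : Q.IsProjResolution)

include hQ

theorem syzygy : Q.syzygy.IsProjResolution where
  proj n := hQ.proj (n + 1)
  surj := (Q.d 0).surjective_rangeRestrict
  exact0 := (Submodule.injective_subtype _).comp_exact_iff_exact.1 (hQ.exactSucc 0)
  exactSucc n := hQ.exactSucc (n + 1)

theorem exact_subtype_range : Exact (LinearMap.range (Q.d 0)).subtype Q.ε :=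
  (Q.d 0).surjective_rangeRestrict.comp_exact_iff_exact.1 hQ.exact0

theorem exact_lcomp (h : ∀ n, ExtVanishes A X Y (n + 1)) (j : ℕ) :
    Exact (LinearMap.lcomp ℤ Y (Q.d j)) (LinearMap.lcomp ℤ Y (Q.d (j + 1))) := by
  induction j generalizing X with
  | zero => exact (h 0).exact_lcomp (hQ.exactSucc 0) hQ.exact0 hQ.surj
  | succ _ ih =>
    have := hQ.proj 0
    exact ih hQ.syzygy fun n => .left_of_right (Submodule.injective_subtype _)
      hQ.exact_subtype_range hQ.surj (.of_projective _ _ n) (h (n + 1))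

theorem extVanishes
    (h : ∀ j, Exact (LinearMap.lcomp ℤ Y (Q.d j)) (LinearMap.lcomp ℤ Y (Q.d (j + 1)))) (n : ℕ) :
    ExtVanishes A X Y (n + 1) := by
  have := hQ.proj 0
  induction n generalizing X with
  | zero =>
    exact .one_of_exact_lcomp (hQ.exactSucc 0).linearMap_comp_eq_zero hQ.exact0 hQ.surj
      (.of_projective _ _ 0) (h 0)
  | succ n ih =>
    exact .right_of_left (Submodule.injective_subtype _) hQ.exact_subtype_range hQ.surj
      (ih hQ.syzygy (fun j => h (j + 1)) (hQ.proj 1)) (.of_projective _ _ (n + 1))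

end IsProjResolution

open CategoryTheory in
variable (A X) in
theorem exists_isProjResolution : ∃ Q : ResolutionData A X, Q.IsProjResolution := by
  let Q := ProjectiveResolution.of (ModuleCat.of A X)
  have exact_iff := fun S : ShortComplex (ModuleCat.{u} A) =>
    ShortComplex.ShortExact.moduleCat_exact_iff_function_exact S
  refine ⟨{ P n := Q.complex.X n
            d n := (Q.complex.d (n + 1) n).hom
            ε := (Q.π.f 0).hom }, ?_, ?_, ?_, ?_⟩
  · exact fun n => (IsProjective.iff_projective _).2 (Q.projective n)
  · exact (ModuleCat.epi_iff_surjective _).1 inferInstance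
  · exact (exact_iff _).1 Q.exact₀
  · exact fun n => (exact_iff _).1 (Q.exact_succ n)

end ResolutionData

theorem extVanishAll_iff {X Y : Type u} [AddCommGroup X] [Module A X] [AddCommGroup Y]
    [Module A Y] : ExtVanishAll A X Y ↔ ∀ n, ExtVanishes A X Y (n + 1) := by
  refine ⟨fun ⟨Q, hQ, hexact⟩ => hQ.extVanishes hexact, fun h => ?_⟩
  obtain ⟨Q, hQ⟩ := ResolutionData.exists_isProjResolution A X
  exact ⟨Q, hQ, hQ.exact_lcomp h⟩

end Resolutions

/-! ## Finite homological dimension and Gorenstein injective modules -/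

section Dimensions

variable {A : Type u} [Ring A]

open CategoryTheory in
theorem HasClassResolution.hasProjectiveDimensionLT {n : ℕ} {X : ModuleCat.{u} A}
    (h : HasClassResolution A (fun P => Module.Projective A P) n X) :
    HasProjectiveDimensionLT X (n + 1) := by
  induction n generalizing X with
  | zero =>
    have : Projective X := (IsProjective.iff_projective X).1 h
    infer_instance
  | succ n ih =>
    obtain ⟨e, hP, hker⟩ := h
    have : Projective e.P := (IsProjective.iff_projective e.P).1 hP
    exact (LinearMap.shortExact_shortComplexKer e.surj).hasProjectiveDimensionLT_X₃ (n + 1)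
      (ih hker) (hasProjectiveDimensionLT_of_ge _ 1 _ (by lia))

theorem ProjDimLE.extVanishes {X Y : Type u} [AddCommGroup X] [Module A X] [AddCommGroup Y]
    [Module A Y] {n i : ℕ} (h : ProjDimLE A X n) (hi : n < i) : ExtVanishes A X Y i :=
  have := HasClassResolution.hasProjectiveDimensionLT h
  CategoryTheory.HasProjectiveDimensionLT.subsingleton _ (n + 1) i hi _

theorem HasClassCoresolution.extVanishes {n : ℕ} {X : ModuleCat.{u} A}
    {𝒞 : ModuleCat.{u} A → Prop} {Y : Type u} [AddCommGroup Y] [Module A Y]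
    (h : HasClassCoresolution A 𝒞 n X)
    (hY : ∀ E : ModuleCat.{u} A, 𝒞 E → ∀ i, ExtVanishes A E Y (i + 1)) (i : ℕ) :
    ExtVanishes A X Y (i + 1) := by
  induction n generalizing X i with
  | zero => exact hY X h i
  | succ n ih =>
    obtain ⟨m, hE, hquot⟩ := h
    exact .left_of_right m.inj (LinearMap.exact_map_mkQ_range m.f) (Submodule.mkQ_surjective _)
      (hY _ hE i) (ih hquot (i + 1))

namespace ZComplex

/-- `M` is isomorphic to the module of cocycles of `C` in some degree; closing up under isomorphism
lets dimension shifting along `C` start at any `M`. -/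
def IsCocycleModule (C : ZComplex A) (M : Type u) [AddCommGroup M] [Module A M] : Prop :=
  ∃ j, Nonempty (M ≃ₗ[A] LinearMap.ker (C.d j))

variable {C : ZComplex A}

theorem isCocycleModule_ker (j : ℤ) : C.IsCocycleModule (LinearMap.ker (C.d j)) :=
  ⟨j, ⟨.refl A _⟩⟩

/-- The differential `d^j` with codomain the cocycles in degree `j + 1`; for exact `C` it makes
`0 → ker d^j → C^j → ker d^{j+1} → 0` short exact. -/
def toCocycles (hC : C.IsExact) (j : ℤ) : C.P j →ₗ[A] LinearMap.ker (C.d (j + 1)) :=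
  (C.d j).codRestrict _ (hC j).apply_apply_eq_zero

theorem toCocycles_surjective (hC : C.IsExact) (j : ℤ) : Surjective (toCocycles hC j) := by
  rintro ⟨x, hx⟩
  obtain ⟨y, rfl⟩ := (hC j x).1 hx
  exact ⟨y, rfl⟩

theorem exact_subtype_toCocycles (hC : C.IsExact) (j : ℤ) :
    Exact (LinearMap.ker (C.d j)).subtype (toCocycles hC j) :=
  (Submodule.injective_subtype _).comp_exact_iff_exact.1 (C.d j).exact_subtype_ker_map

namespace IsCocycleModule

variable {X M : Type u} [AddCommGroup X] [Module A X] [AddCommGroup M] [Module A M]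
  (hC : C.IsExact) (hM : C.IsCocycleModule M)

include hC hM

theorem exists_exact_subtype_ker :
    ∃ (j : ℤ) (g : C.P j →ₗ[A] M), Exact (LinearMap.ker (C.d j)).subtype g ∧ Surjective g := by
  obtain ⟨j, ⟨e⟩⟩ := hM
  obtain ⟨j, rfl⟩ : ∃ i, j = i + 1 := ⟨j - 1, by ring⟩
  exact ⟨j, e.symm.toLinearMap.comp (toCocycles hC j),
    e.symm.injective.comp_exact_iff_exact.2 (exact_subtype_toCocycles hC j),
    e.symm.surjective.comp (toCocycles_surjective hC j)⟩

theorem extVanishes_of_projDimLE (hinj : ∀ i, Module.Injective A (C.P i)) {n : ℕ}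
    (hX : ProjDimLE A X n) (i : ℕ) : ExtVanishes A X M (i + 1) := by
  suffices ∀ k, n ≤ i + k → ExtVanishes A X M (i + 1) from this n (by lia)
  intro k hk
  induction k generalizing M i with
  | zero => exact hX.extVanishes (by lia)
  | succ k ih =>
    obtain ⟨j, g, hexact, hsurj⟩ := hM.exists_exact_subtype_ker hC
    have := hinj j
    exact .right_of_middle (Submodule.injective_subtype _) hexact hsurj (.of_injective _ _ i)
      (ih (isCocycleModule_ker j) (i + 1) (by lia))

theorem extVanishes_of_exact_compRight (hinj : ∀ i, Module.Injective A (C.P i))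
    (hX : ∀ i, Exact (LinearMap.compRight ℤ (C.d i) : (X →ₗ[A] C.P i) →ₗ[ℤ] _)
      (LinearMap.compRight ℤ (C.d (i + 1)))) (i : ℕ) : ExtVanishes A X M (i + 1) := by
  obtain ⟨j, ⟨e⟩⟩ := hM
  have := hinj j
  have hf : Injective ((LinearMap.ker (C.d j)).subtype.comp e.toLinearMap) :=
    (Submodule.injective_subtype _).comp e.injective
  have hexact : Exact ((LinearMap.ker (C.d j)).subtype.comp e.toLinearMap) (toCocycles hC j) :=
    e.surjective.comp_exact_iff_exact.2 (exact_subtype_toCocycles hC j)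
  induction i generalizing j M with
  | zero =>
    refine .one_of_compRight_surjective hf hexact (toCocycles_surjective hC j)
      (.of_injective _ _ 0) fun φ => ?_
    obtain ⟨ψ, hψ⟩ := (hX j ((Submodule.subtype _).comp φ)).1 (LinearMap.ext fun x => (φ x).2)
    exact ⟨ψ, LinearMap.ext fun x => Subtype.ext (LinearMap.congr_fun hψ x)⟩
  | succ i ih =>
    exact .left_of_middle hf hexact (toCocycles_surjective hC j)
      (ih (j + 1) (.refl A _) (hinj _) (Submodule.injective_subtype _)
        (exact_subtype_toCocycles hC (j + 1))) (.of_injective _ _ (i + 1))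

end IsCocycleModule

end ZComplex

end Dimensions

/-! ## Character modules -/

section Characters

open CharacterModule (dual)

theorem exact_dual_iff {A X Y Z : Type*} [CommRing A] [AddCommGroup X] [Module A X]
    [AddCommGroup Y] [Module A Y] [AddCommGroup Z] [Module A Z] {f : X →ₗ[A] Y} {g : Y →ₗ[A] Z} :
    Exact (dual g) (dual f) ↔ Exact f g := by
  refine ⟨fun h => LinearMap.exact_iff.2 (le_antisymm (fun y hy => ?_) ?_),
    fun h χ => ⟨fun hχ => ?_, ?_⟩⟩
  · refine (Submodule.Quotient.mk_eq_zero _).1 (CharacterModule.eq_zero_of_character_apply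
      fun χ => ?_)
    obtain ⟨ψ, hψ⟩ := (h (dual (LinearMap.range f).mkQ χ)).1 <| CharacterModule.ext _ fun x =>
      (congrArg χ (LinearMap.congr_fun (LinearMap.range_mkQ_comp f) x)).trans (map_zero χ)
    exact (DFunLike.congr_fun hψ y).symm.trans ((congrArg ψ hy).trans (map_zero ψ))
  · rintro _ ⟨x, rfl⟩
    exact CharacterModule.eq_zero_of_character_apply fun χ =>
      DFunLike.congr_fun (h.apply_apply_eq_zero χ) x
  · let χ' : CharacterModule (Y ⧸ LinearMap.ker g) :=
      QuotientAddGroup.lift (LinearMap.ker g).toAddSubgroup χ fun y hy => by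
        obtain ⟨x, rfl⟩ := (h y).1 hy
        exact DFunLike.congr_fun hχ x
    have hinj : Injective ((LinearMap.ker g).liftQ g le_rfl) :=
      LinearMap.ker_eq_bot.1 (Submodule.ker_liftQ_eq_bot _ _ _ le_rfl)
    obtain ⟨ψ, hψ⟩ := CharacterModule.dual_surjective_of_injective _ hinj χ'
    exact ⟨ψ, CharacterModule.ext _ fun y => DFunLike.congr_fun hψ (Submodule.Quotient.mk y)⟩
  · rintro ⟨ψ, rfl⟩
    exact CharacterModule.ext _ fun x => (congrArg ψ (h.apply_apply_eq_zero x)).trans (map_zero ψ)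

variable {S : Type u} [Ring S]

/-- The characters of a left `S`-module form a right `S`-module via `(χ • s) x = χ (s • x)`;
Mathlib has this for commutative rings only. -/
instance characterModuleOpModule {X : Type*} [AddCommGroup X] [Module S X] :
    Module Sᵐᵒᵖ (CharacterModule X) :=
  inferInstanceAs (Module Sᵈᵐᵃ (X →+ AddCircle (1 : ℚ)))

/-- The characters of a right `S`-module form a left `S`-module via `(s • χ) n = χ (n • s)`. -/
instance characterModuleOfOpModule {N : Type*} [AddCommGroup N] [Module Sᵐᵒᵖ N] :
    Module S (CharacterModule N) :=
  Module.compHom _ (RingEquiv.opOp S).toRingHom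

section RightModules

variable {N N' N'' : Type u} [AddCommGroup N] [Module Sᵐᵒᵖ N] [AddCommGroup N'] [Module Sᵐᵒᵖ N']
  [AddCommGroup N''] [Module Sᵐᵒᵖ N'']

/-- The dual `N'⁺ → N⁺` of a homomorphism of right `S`-modules, as a homomorphism of left
`S`-modules; Mathlib's `CharacterModule.dual` is restricted to commutative rings. -/
def characterMap (g : N →ₗ[Sᵐᵒᵖ] N') : CharacterModule N' →ₗ[S] CharacterModule N where
  __ := (dual g.toAddMonoidHom.toIntLinearMap).toAddMonoidHom
  map_smul' s χ := CharacterModule.ext _ fun n => congrArg χ (g.map_smul (op s) n).symm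

variable {f : N →ₗ[Sᵐᵒᵖ] N'} {g : N' →ₗ[Sᵐᵒᵖ] N''}

theorem characterMap_injective (hg : Surjective g) : Injective (characterMap g) :=
  CharacterModule.dual_injective_of_surjective g.toAddMonoidHom.toIntLinearMap hg

theorem characterMap_surjective (hf : Injective f) : Surjective (characterMap f) :=
  CharacterModule.dual_surjective_of_injective f.toAddMonoidHom.toIntLinearMap hf

theorem exact_characterMap (hfg : Exact f g) : Exact (characterMap g) (characterMap f) :=
  exact_dual_iff (f := f.toAddMonoidHom.toIntLinearMap) (g := g.toAddMonoidHom.toIntLinearMap).2 hfg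

/-- Exchanging arguments turns an `S`-linear map `X → N⁺` into an `Sᵐᵒᵖ`-linear map `N → X⁺`; thus
maps into `N⁺` extend when maps out of `N` lift. -/
def characterFlip {X : Type*} [AddCommGroup X] [Module S X] :
    (X →ₗ[S] CharacterModule N) ≃ (N →ₗ[Sᵐᵒᵖ] CharacterModule X) where
  toFun θ :=
    { toFun n := AddMonoidHom.mk' (fun x => θ x n) fun x y => by rw [map_add]; rfl
      map_add' n n' := CharacterModule.ext _ fun x => map_add (θ x) n n'
      map_smul' s n := CharacterModule.ext _ fun x =>
        (DFunLike.congr_fun (θ.map_smul s.unop x) n).symm }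
  invFun φ :=
    { toFun x := AddMonoidHom.mk' (fun n => φ n x) fun n n' => by rw [map_add]; rfl
      map_add' x y := CharacterModule.ext _ fun n => map_add (φ n) x y
      map_smul' s x := CharacterModule.ext _ fun n =>
        (DFunLike.congr_fun (φ.map_smul (op s) n) x).symm }
  left_inv _ := rfl
  right_inv _ := rfl

theorem injective_characterModule [Module.Projective Sᵐᵒᵖ N] :
    Module.Injective S (CharacterModule N) where
  out X Y _ _ _ _ i hi θ := by
    let iDual : CharacterModule Y →ₗ[Sᵐᵒᵖ] CharacterModule X :=
      { (dual i.toAddMonoidHom.toIntLinearMap).toAddMonoidHom with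
        map_smul' := fun s χ => CharacterModule.ext _ fun x =>
          congrArg χ (i.map_smul s.unop x).symm }
    have hsurj : Surjective iDual :=
      CharacterModule.dual_surjective_of_injective i.toAddMonoidHom.toIntLinearMap hi
    obtain ⟨φ, hφ⟩ := Module.projective_lifting_property iDual (characterFlip θ) hsurj
    exact ⟨characterFlip.symm φ, fun x => CharacterModule.ext _ fun n =>
      DFunLike.congr_fun (LinearMap.congr_fun hφ n) x⟩

end RightModules

end Characters

/-! ## Tensor products and `Tor` -/

section TensorCharacters

open CharacterModule (dual)

variable {S : Type u} [Ring S] {N N' N'' : Type u} [AddCommGroup N] [Module Sᵐᵒᵖ N]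
  [AddCommGroup N'] [Module Sᵐᵒᵖ N'] [AddCommGroup N''] [Module Sᵐᵒᵖ N'']
  {T : Type u} [AddCommGroup T] [Module S T]

namespace MTensor

theorem addHom_ext {G : Type*} [AddGroup G] {φ ψ : MTensor S N T →+ G}
    (h : ∀ n t, φ (mk n t) = ψ (mk n t)) : φ = ψ := by
  refine QuotientAddGroup.addMonoidHom_ext _ (AddMonoidHom.ext fun x => ?_)
  induction x using TensorProduct.induction_on with
  | zero => simp
  | tmul t n => exact h n t
  | add x y hx hy => rw [map_add, map_add, hx, hy]

theorem mk_smul_right (n : N) (s : S) (t : T) :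
    (mk n (s • t) : MTensor S N T) = mk (op s • n) t :=
  QuotientAddGroup.eq_iff_sub_mem.2 (AddSubgroup.subset_closure ⟨s, t, n, rfl⟩)

theorem mk_add_left (n n' : N) (t : T) :
    (mk (n + n') t : MTensor S N T) = mk n t + mk n' t :=
  congrArg QuotientAddGroup.mk (TensorProduct.tmul_add t n n')

variable (S N T) in
/-- The adjunction isomorphism `(N ⊗_S T)⁺ ≃ Hom_S(T, N⁺)`. -/
def characterEquiv : CharacterModule (MTensor S N T) ≃+ (T →ₗ[S] CharacterModule N) where
  toFun c :=
    { toFun t := AddMonoidHom.mk' (fun n => c (mk n t)) fun n n' => by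
        rw [mk_add_left]; exact map_add c _ _
      map_add' t t' := CharacterModule.ext _ fun n =>
        (congrArg c (mk_add_right n t t')).trans (map_add c _ _)
      map_smul' s t := CharacterModule.ext _ fun n => congrArg c (mk_smul_right n s t) }
  invFun θ := QuotientAddGroup.lift _
    (TensorProduct.liftAddHom
      (AddMonoidHom.mk' (fun t => (θ t : N →+ AddCircle (1 : ℚ))) fun t t' => map_add θ t t')
      fun z t n => by
        change θ (z • t) n = θ t (z • n)
        rw [map_zsmul, map_zsmul]; rfl)
    ((AddSubgroup.closure_le _).2 <| by
      rintro _ ⟨s, t, n, rfl⟩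
      simp only [SetLike.mem_coe, AddMonoidHom.mem_ker, map_sub, TensorProduct.liftAddHom_tmul]
      exact sub_eq_zero.2 (DFunLike.congr_fun (θ.map_smul s t) n))
  left_inv _ := addHom_ext fun _ _ => rfl
  right_inv _ := rfl
  map_add' _ _ := rfl

theorem exact_map_iff {f : N →ₗ[Sᵐᵒᵖ] N'} {g : N' →ₗ[Sᵐᵒᵖ] N''} :
    Exact (map (T := T) f) (map (T := T) g) ↔
      Exact (LinearMap.compRight ℤ (characterMap g) : (T →ₗ[S] _) →ₗ[ℤ] _)
        (LinearMap.compRight ℤ (characterMap f)) :=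
  (exact_dual_iff (f := (map (T := T) f).toIntLinearMap)
    (g := (map (T := T) g).toIntLinearMap)).symm.trans
    (Exact.iff_of_ladder_addEquiv (characterEquiv S N'' T) (characterEquiv S N' T)
      (characterEquiv S N T)
      (f₁₂ := (dual (map (T := T) g).toIntLinearMap).toAddMonoidHom)
      (f₂₃ := (dual (map (T := T) f).toIntLinearMap).toAddMonoidHom)
      (g₁₂ := (LinearMap.compRight ℤ (characterMap g)).toAddMonoidHom)
      (g₂₃ := (LinearMap.compRight ℤ (characterMap f)).toAddMonoidHom) rfl rfl).symm

end MTensor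

theorem extVanishes_characterModule_syzygy {Q : ResolutionData Sᵐᵒᵖ N} (hQ : Q.IsProjResolution)
    (h : ∀ n, ExtVanishes S T (CharacterModule N) (n + 1)) (n : ℕ) :
    ExtVanishes S T (CharacterModule (LinearMap.range (Q.d 0))) (n + 1) :=
  have := hQ.proj 0
  have := injective_characterModule (S := S) (N := Q.P 0)
  .right_of_middle (characterMap_injective hQ.surj) (exact_characterMap hQ.exact_subtype_range)
    (characterMap_surjective (Submodule.injective_subtype _)) (.of_injective _ _ n) (h (n + 1))

theorem torVanishAll_of_extVanishes (h : ∀ n, ExtVanishes S T (CharacterModule N) (n + 1)) :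
    TorVanishAll S N T := by
  obtain ⟨Q, hQ⟩ := ResolutionData.exists_isProjResolution Sᵐᵒᵖ N
  refine ⟨Q, hQ, fun j => ?_⟩
  induction j generalizing N with
  | zero =>
    exact MTensor.exact_map_iff.2 <| (h 0).exact_compRight (characterMap_injective hQ.surj)
      (exact_characterMap hQ.exact0) (exact_characterMap (hQ.exactSucc 0))
  | succ _ ih => exact ih (extVanishes_characterModule_syzygy hQ h) Q.syzygy hQ.syzygy

end TensorCharacters

/-! ## The dual of the evaluation map -/

section EvalCharacter

open CharacterModule (dual)

variable (S R : Type u) [Ring S] [Ring R] (T : Type u) [AddCommGroup T] [Module S T]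
  [Module Rᵐᵒᵖ T] [SMulCommClass S Rᵐᵒᵖ T] {M K P K' : Type u} [AddCommGroup M] [Module Rᵐᵒᵖ M]
  [AddCommGroup K] [Module Rᵐᵒᵖ K] [AddCommGroup P] [Module Rᵐᵒᵖ P] [AddCommGroup K']
  [Module Rᵐᵒᵖ K']

variable (M) in
/-- The dual of the evaluation map `ν_M`, read through the adjunction isomorphism
`(Hom_R(T, M) ⊗_S T)⁺ ≃ Hom_S(T, Hom_R(T, M)⁺)`; it sends `χ` to `t ↦ (h ↦ χ (h t))`. -/
def evalCharacter : CharacterModule M →+ (T →ₗ[S] CharacterModule (T →ₗ[Rᵐᵒᵖ] M)) :=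
  (MTensor.characterEquiv S (T →ₗ[Rᵐᵒᵖ] M) T).toAddMonoidHom.comp
    (dual (MTensor.nuFun S R T M).toIntLinearMap).toAddMonoidHom

theorem evalCharacter_bijective_iff :
    Bijective (evalCharacter S R T M) ↔ Bijective (MTensor.nuFun S R T M) :=
  ((MTensor.characterEquiv S (T →ₗ[Rᵐᵒᵖ] M) T).toEquiv.comp_bijective _).trans
    (CharacterModule.dual_bijective_iff_bijective (f := (MTensor.nuFun S R T M).toIntLinearMap))

/-- Postcomposition with `g` as a homomorphism `Hom_R(T, M) → Hom_R(T, K)` of right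
`S`-modules, so that its dual is a homomorphism of left `S`-modules. -/
def homMap (g : M →ₗ[Rᵐᵒᵖ] K) : (T →ₗ[Rᵐᵒᵖ] M) →ₗ[Sᵐᵒᵖ] (T →ₗ[Rᵐᵒᵖ] K) where
  toFun h := g.comp h
  map_add' h h' := LinearMap.comp_add h h' g
  map_smul' _ _ := rfl

theorem evalCharacter_naturality (g : M →ₗ[Rᵐᵒᵖ] K) :
    (LinearMap.compRight ℤ (characterMap (homMap S R T g))).toAddMonoidHom.comp
        (evalCharacter S R T K) =
      (evalCharacter S R T M).comp (characterMap g).toAddMonoidHom := rfl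

variable {f : K →ₗ[Rᵐᵒᵖ] P} {g : P →ₗ[Rᵐᵒᵖ] K'}

theorem evalCharacter_injective_of_surjective (hg : Surjective g)
    (hP : Injective (evalCharacter S R T P)) : Injective (evalCharacter S R T K') :=
  .of_comp (f := LinearMap.compRight ℤ (characterMap (homMap S R T g)))
    (hP.comp (characterMap_injective hg))

variable (hf : Injective f) (hfg : Exact f g) (hg : Surjective g) (hext : ExtVanishes Rᵐᵒᵖ T K 1)

section

include hf

theorem characterMap_homMap_surjective : Surjective (characterMap (homMap S R T f)) :=
  characterMap_surjective fun _ _ h => (LinearMap.cancel_left hf).1 h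

include hfg

theorem exact_characterMap_homMap :
    Exact (characterMap (homMap S R T g)) (characterMap (homMap S R T f)) :=
  exact_characterMap (exact_compRight T hf hfg)

include hg hext

theorem characterMap_homMap_injective : Injective (characterMap (homMap S R T g)) :=
  characterMap_injective (hext.compRight_surjective hf hfg hg)

end

include hf hfg hg hext

theorem evalCharacter_surjective_of_exact (hK : Injective (evalCharacter S R T K))
    (hP : Surjective (evalCharacter S R T P)) : Surjective (evalCharacter S R T K') :=
  have hinj := characterMap_homMap_injective S R T hf hfg hg hext
  AddMonoidHom.surjective_of_surjective_of_injective_of_left_exact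
    (characterMap g).toAddMonoidHom (characterMap f).toAddMonoidHom
    (LinearMap.compRight ℤ (characterMap (homMap S R T g))).toAddMonoidHom
    (LinearMap.compRight ℤ (characterMap (homMap S R T f))).toAddMonoidHom
    (evalCharacter S R T K') (evalCharacter S R T P) (evalCharacter S R T K)
    (evalCharacter_naturality S R T g) (evalCharacter_naturality S R T f)
    (exact_characterMap hfg)
    (exact_compRight T hinj (exact_characterMap_homMap S R T hf hfg))
    hP hK fun _ _ h => (LinearMap.cancel_left hinj).1 h

theorem extVanishes_characterModule_one_of_exact (hK : Surjective (evalCharacter S R T K))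
    (hP : ExtVanishes S T (CharacterModule (T →ₗ[Rᵐᵒᵖ] P)) 1) :
    ExtVanishes S T (CharacterModule (T →ₗ[Rᵐᵒᵖ] K')) 1 :=
  .one_of_compRight_surjective (characterMap_homMap_injective S R T hf hfg hg hext)
    (exact_characterMap_homMap S R T hf hfg) (characterMap_homMap_surjective S R T hf) hP <|
    .of_comp (g := evalCharacter S R T P) (hK.comp (characterMap_surjective hf))

theorem extVanishes_characterModule_succ_of_exact {n : ℕ}
    (hK : ExtVanishes S T (CharacterModule (T →ₗ[Rᵐᵒᵖ] K)) n)
    (hP : ExtVanishes S T (CharacterModule (T →ₗ[Rᵐᵒᵖ] P)) (n + 1)) :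
    ExtVanishes S T (CharacterModule (T →ₗ[Rᵐᵒᵖ] K')) (n + 1) :=
  .left_of_middle (characterMap_homMap_injective S R T hf hfg hg hext)
    (exact_characterMap_homMap S R T hf hfg) (characterMap_homMap_surjective S R T hf) hK hP

end EvalCharacter

/-! ## Injective modules -/

section InjectiveModules

open CharacterModule (dual)

theorem exact_lcomp_of_injective {A X₀ X₁ X₂ : Type u} [Ring A] [AddCommGroup X₀] [Module A X₀]
    [AddCommGroup X₁] [Module A X₁] [AddCommGroup X₂] [Module A X₂] {f : X₂ →ₗ[A] X₁}
    {g : X₁ →ₗ[A] X₀} (E : Type u) [AddCommGroup E] [Module A E] [Module.Injective A E]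
    (hfg : Exact f g) : Exact (LinearMap.lcomp ℤ E g) (LinearMap.lcomp ℤ E f) :=
  (ExtVanishes.of_injective _ E 0).exact_lcomp hfg (LinearMap.exact_map_mkQ_range g)
    (Submodule.mkQ_surjective _)

variable {S : Type u} (R : Type u) [Ring S] [Ring R] (T : Type u) [AddCommGroup T] [Module S T]
  [Module Rᵐᵒᵖ T] [SMulCommClass S Rᵐᵒᵖ T] (E : Type u) [AddCommGroup E] [Module Rᵐᵒᵖ E]
  {F F₀ F₁ F₂ : Type u} [AddCommGroup F] [Module S F] [AddCommGroup F₀] [Module S F₀]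
  [AddCommGroup F₁] [Module S F₁] [AddCommGroup F₂] [Module S F₂]

variable (S F) in
/-- The dual of the evaluation map `Hom_R(T, E) ⊗_S F → Hom_R(Hom_S(F, T), E)`,
`h ⊗ y ↦ (g ↦ h (g y))`, where `Hom_S(F, Hom_R(T, E)⁺)` stands for `(Hom_R(T, E) ⊗_S F)⁺`. -/
def homEvalCharacter :
    CharacterModule ((F →ₗ[S] T) →ₗ[Rᵐᵒᵖ] E) →+ (F →ₗ[S] CharacterModule (T →ₗ[Rᵐᵒᵖ] E)) where
  toFun ψ :=
    { toFun y := AddMonoidHom.mk' (fun h => ψ (h.comp (LinearMap.applyₗ' Rᵐᵒᵖ y)))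
        fun h h' => by rw [LinearMap.add_comp, map_add]
      map_add' y y' := CharacterModule.ext _ fun h => by
        change ψ _ = ψ _ + ψ _
        rw [map_add, LinearMap.comp_add, map_add]
      map_smul' s y := CharacterModule.ext _ fun h => congrArg ψ <| LinearMap.ext fun g =>
        congrArg h (g.map_smul s y) }
  map_zero' := rfl
  map_add' _ _ := rfl

/-- The homomorphism `Hom_R(Hom_S(F, T), E)⁺ → Hom_R(Hom_S(F₀, T), E)⁺` induced by `d : F₀ → F`;
it makes the domain of `homEvalCharacter` a contravariant functor of `F`. -/
def homHomDual (d : F₀ →ₗ[S] F) :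
    CharacterModule ((F →ₗ[S] T) →ₗ[Rᵐᵒᵖ] E) →ₗ[ℤ] CharacterModule ((F₀ →ₗ[S] T) →ₗ[Rᵐᵒᵖ] E) :=
  dual (LinearMap.lcomp ℤ E (LinearMap.lcomp Rᵐᵒᵖ T d))

theorem homEvalCharacter_naturality (d : F₀ →ₗ[S] F) :
    (LinearMap.lcomp ℤ _ d).toAddMonoidHom.comp (homEvalCharacter S R T E F) =
      (homEvalCharacter S R T E F₀).comp (homHomDual R T E d).toAddMonoidHom := rfl

section FiniteProjective

variable [Module.Finite S F] [Module.Projective S F]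

variable (S F) in
theorem exists_finite_dualBasis :
    ∃ (n : ℕ) (x : Fin n → F) (f : Fin n → F →ₗ[S] S), ∀ y, ∑ i, f i y • x i = y := by
  obtain ⟨n, p, q, -, -, hpq⟩ := Module.Finite.exists_comp_eq_id_of_projective S F
  refine ⟨n, fun i => p (Pi.single i 1), fun i => (LinearMap.proj i).comp q, fun y => ?_⟩
  have hp (v : Fin n → S) : ∑ i, v i • p (Pi.single i 1) = p v := by
    simp_rw [← map_smul, ← map_sum, ← Pi.single_smul, smul_eq_mul, mul_one,
      Finset.univ_sum_single]
  exact (hp (q y)).trans (LinearMap.congr_fun hpq y)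

/-- The homomorphism `T → Hom_S(F, T)` of right `R`-modules sending `t` to `y ↦ f y • t`;
along a dual basis of `F` these expand the elements of `Hom_S(F, T)`. -/
def smulRightHom (f : F →ₗ[S] S) : T →ₗ[Rᵐᵒᵖ] (F →ₗ[S] T) :=
  (LinearMap.lcomp Rᵐᵒᵖ T f).comp (LinearMap.ringLmapEquivSelf S Rᵐᵒᵖ T).symm.toLinearMap

theorem homEvalCharacter_bijective_of_projective : Bijective (homEvalCharacter S R T E F) := by
  obtain ⟨n, x, f, hx⟩ := exists_finite_dualBasis S F
  have expand_hom (g : F →ₗ[S] T) : ∑ i, smulRightHom R T (f i) (g (x i)) = g := by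
    ext y
    conv_rhs => rw [← hx y, map_sum]
    simp [smulRightHom]
  have expand_dual (Φ : (F →ₗ[S] T) →ₗ[Rᵐᵒᵖ] E) :
      ∑ i, (Φ.comp (smulRightHom R T (f i))).comp (LinearMap.applyₗ' Rᵐᵒᵖ (x i)) = Φ := by
    ext g
    conv_rhs => rw [← expand_hom g, map_sum]
    simp
  refine ⟨fun ψ ψ' h => CharacterModule.ext _ fun Φ => ?_, fun θ => ?_⟩
  · rw [← expand_dual Φ, map_sum, map_sum]
    exact Finset.sum_congr rfl fun i _ => DFunLike.congr_fun (LinearMap.congr_fun h (x i)) _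
  · refine ⟨AddMonoidHom.mk' (fun Φ => ∑ i, θ (x i) (Φ.comp (smulRightHom R T (f i))))
      fun Φ Φ' => ?_, LinearMap.ext fun y => CharacterModule.ext _ fun h => ?_⟩
    · simp_rw [LinearMap.add_comp, map_add, Finset.sum_add_distrib]
    · conv_rhs => rw [← hx y, map_sum]
      refine .trans ?_ (AddMonoidHom.finsetSum_apply (fun i => θ (f i y • x i)) Finset.univ h).symm
      change ∑ i, θ (x i) ((h.comp (LinearMap.applyₗ' Rᵐᵒᵖ y)).comp (smulRightHom R T (f i))) = _
      exact Finset.sum_congr rfl fun i _ => (DFunLike.congr_fun (map_smul θ (f i y) (x i)) h).symm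

end FiniteProjective

variable [Module.Injective Rᵐᵒᵖ E]

variable {T} in
theorem exact_homHomDual {d : F₂ →ₗ[S] F₁} {d' : F₁ →ₗ[S] F₀}
    (h : Exact (LinearMap.lcomp ℤ T d') (LinearMap.lcomp ℤ T d)) :
    Exact (homHomDual R T E d') (homHomDual R T E d) :=
  exact_dual_iff.2 (exact_lcomp_of_injective E (f := LinearMap.lcomp Rᵐᵒᵖ T d')
    (g := LinearMap.lcomp Rᵐᵒᵖ T d) h)

theorem homHomDual_injective {d : F₁ →ₗ[S] F₀} (hd : Surjective d) :
    Injective (homHomDual R T E d) := by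
  refine CharacterModule.dual_injective_of_surjective _ fun φ => ?_
  obtain ⟨ψ, hψ⟩ := Module.Injective.out (LinearMap.lcomp Rᵐᵒᵖ T d)
    (fun _ _ h => (LinearMap.cancel_right hd).1 h) φ
  exact ⟨ψ, LinearMap.ext hψ⟩

variable [Module.Finite S F₀] [Module.Projective S F₀] [Module.Finite S F₁] [Module.Projective S F₁]

theorem homEvalCharacter_bijective_of_presentation {d : F₁ →ₗ[S] F₀} {ε : F₀ →ₗ[S] F}
    (hd : Exact d ε) (hε : Surjective ε) : Bijective (homEvalCharacter S R T E F) :=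
  AddMonoidHom.bijective_of_bijective_of_injective_of_left_exact
    (homHomDual R T E ε).toAddMonoidHom (homHomDual R T E d).toAddMonoidHom
    (LinearMap.lcomp ℤ _ ε).toAddMonoidHom (LinearMap.lcomp ℤ _ d).toAddMonoidHom
    (homEvalCharacter S R T E F) (homEvalCharacter S R T E F₀) (homEvalCharacter S R T E F₁)
    (homEvalCharacter_naturality R T E ε) (homEvalCharacter_naturality R T E d)
    (exact_homHomDual R E (exact_lcomp T hd hε)) (exact_lcomp _ hd hε)
    (homEvalCharacter_bijective_of_projective R T E)
    (homEvalCharacter_bijective_of_projective R T E).1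
    (homHomDual_injective R T E hε) fun _ _ h => (LinearMap.cancel_right hε).1 h

theorem exact_lcomp_characterModule_of_exact_lcomp [Module.Finite S F₂] [Module.Projective S F₂]
    {d : F₂ →ₗ[S] F₁} {d' : F₁ →ₗ[S] F₀}
    (h : Exact (LinearMap.lcomp ℤ T d') (LinearMap.lcomp ℤ T d)) :
    Exact (LinearMap.lcomp ℤ (CharacterModule (T →ₗ[Rᵐᵒᵖ] E)) d') (LinearMap.lcomp ℤ _ d) :=
  (Exact.iff_of_ladder_addEquiv
    (.ofBijective _ (homEvalCharacter_bijective_of_projective R T E (F := F₀)))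
    (.ofBijective _ (homEvalCharacter_bijective_of_projective R T E (F := F₁)))
    (.ofBijective _ (homEvalCharacter_bijective_of_projective R T E (F := F₂)))
    (f₁₂ := (homHomDual R T E d').toAddMonoidHom) (f₂₃ := (homHomDual R T E d).toAddMonoidHom)
    (g₁₂ := (LinearMap.lcomp ℤ _ d').toAddMonoidHom) (g₂₃ := (LinearMap.lcomp ℤ _ d).toAddMonoidHom)
    (homEvalCharacter_naturality R T E d') (homEvalCharacter_naturality R T E d)).2
    (exact_homHomDual R E h)

end InjectiveModules

section EvalInjective

variable {S R : Type u} [Ring S] [Ring R] {T : Type u} [AddCommGroup T] [Module S T]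
  [Module Rᵐᵒᵖ T] [SMulCommClass S Rᵐᵒᵖ T] {E : Type u} [AddCommGroup E] [Module Rᵐᵒᵖ E]

theorem extVanishes_characterModule_of_injective [Module.Injective Rᵐᵒᵖ E] {X : Type u}
    [AddCommGroup X] [Module S X] (hres : HasFGProjResolution S X)
    (hext : ∀ n, ExtVanishes S X T (n + 1)) (n : ℕ) :
    ExtVanishes S X (CharacterModule (T →ₗ[Rᵐᵒᵖ] E)) (n + 1) := by
  obtain ⟨Q, hQ, hfin⟩ := hres
  have := hQ.proj
  exact hQ.extVanishes
    (fun j => exact_lcomp_characterModule_of_exact_lcomp R T E (hQ.exact_lcomp hext j)) n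

variable (hR : Bijective (rightHomothety S R T))

include hR

theorem apply_id_bijective :
    Bijective (LinearMap.applyₗ' ℤ LinearMap.id : ((T →ₗ[S] T) →ₗ[Rᵐᵒᵖ] E) →ₗ[ℤ] E) := by
  let w : Rᵐᵒᵖ ≃ₗ[Rᵐᵒᵖ] (T →ₗ[S] T) := LinearEquiv.ofBijective
    (LinearMap.toSpanSingleton Rᵐᵒᵖ (T →ₗ[S] T) LinearMap.id) (hR.comp unop_bijective)
  have hw : w 1 = LinearMap.id := one_smul Rᵐᵒᵖ (LinearMap.id : T →ₗ[S] T)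
  rw [← hw]
  exact ((LinearEquiv.congrLeft E ℤ w).symm.trans
    (LinearMap.ringLmapEquivSelf Rᵐᵒᵖ ℤ E)).bijective

theorem evalCharacter_bijective_of_injective [Module.Injective Rᵐᵒᵖ E]
    (hres : HasFGProjResolution S T) : Bijective (evalCharacter S R T E) := by
  obtain ⟨Q, hQ, hfin⟩ := hres
  have := hQ.proj
  exact (homEvalCharacter_bijective_of_presentation R T E hQ.exact0 hQ.surj).comp
    (CharacterModule.dual_bijective_iff_bijective.2 (apply_id_bijective hR))

end EvalInjective

/-! ## Bass classes and Gorenstein injective modules -/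

section BassClass

variable {S R : Type u} [Ring S] [Ring R] {T : Type u} [AddCommGroup T] [Module S T]
  [Module Rᵐᵒᵖ T] [SMulCommClass S Rᵐᵒᵖ T] {C : ZComplex Rᵐᵒᵖ} {M : Type u} [AddCommGroup M]
  [Module Rᵐᵒᵖ M]

namespace ZComplex.IsCocycleModule

variable (hC : C.IsExact)

include hC

theorem evalCharacter_injective (hM : C.IsCocycleModule M)
    (hP : ∀ i, Injective (evalCharacter S R T (C.P i))) : Injective (evalCharacter S R T M) := by
  obtain ⟨j, g, -, hg⟩ := hM.exists_exact_subtype_ker hC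
  exact evalCharacter_injective_of_surjective S R T hg (hP j)

variable (hext : ∀ j, ExtVanishes Rᵐᵒᵖ T (LinearMap.ker (C.d j)) 1)
  (hP : ∀ i, Bijective (evalCharacter S R T (C.P i)))

include hext hP

theorem evalCharacter_bijective (hM : C.IsCocycleModule M) :
    Bijective (evalCharacter S R T M) := by
  have hinj := fun i => (hP i).1
  refine ⟨hM.evalCharacter_injective hC hinj, ?_⟩
  obtain ⟨j, g, hfg, hg⟩ := hM.exists_exact_subtype_ker hC
  exact evalCharacter_surjective_of_exact S R T (Submodule.injective_subtype _) hfg hg (hext j)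
    ((isCocycleModule_ker j).evalCharacter_injective hC hinj) (hP j).2

theorem extVanishes_characterModule (hM : C.IsCocycleModule M)
    (hextP : ∀ i n, ExtVanishes S T (CharacterModule (T →ₗ[Rᵐᵒᵖ] C.P i)) (n + 1)) (n : ℕ) :
    ExtVanishes S T (CharacterModule (T →ₗ[Rᵐᵒᵖ] M)) (n + 1) := by
  induction n generalizing M with
  | zero =>
    obtain ⟨j, g, hfg, hg⟩ := hM.exists_exact_subtype_ker hC
    exact extVanishes_characterModule_one_of_exact S R T (Submodule.injective_subtype _) hfg hg
      (hext j) ((isCocycleModule_ker j).evalCharacter_bijective hC hext hP).2 (hextP j 0)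
  | succ n ih =>
    obtain ⟨j, g, hfg, hg⟩ := hM.exists_exact_subtype_ker hC
    exact extVanishes_characterModule_succ_of_exact S R T (Submodule.injective_subtype _) hfg hg
      (hext j) (ih (isCocycleModule_ker j)) (hextP j (n + 1))

end ZComplex.IsCocycleModule

theorem ZComplex.IsCocycleModule.inBassClass (hres : HasFGProjResolution S T)
    (hR : Bijective (rightHomothety S R T)) (hextS : ExtVanishAll S T T) (hC : C.IsExact)
    (hinj : ∀ i, Module.Injective Rᵐᵒᵖ (C.P i))
    (hext : ∀ j, ExtVanishes Rᵐᵒᵖ T (LinearMap.ker (C.d j)) 1) (hM : C.IsCocycleModule M)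
    (hextM : ExtVanishAll Rᵐᵒᵖ T M) : InBassClass S R T M where
  extVanish := hextM
  torVanish := torVanishAll_of_extVanishes <|
    hM.extVanishes_characterModule hC hext
      (fun i => have := hinj i; evalCharacter_bijective_of_injective hR hres)
      (fun i => have := hinj i
        extVanishes_characterModule_of_injective hres (extVanishAll_iff.1 hextS))
  nuBij := (evalCharacter_bijective_iff S R T).1 <|
    hM.evalCharacter_bijective hC hext fun i =>
      have := hinj i; evalCharacter_bijective_of_injective hR hres

theorem gorensteinInjective_mem_bass_general (hres : HasFGProjResolution S T)
    (hR : Bijective (rightHomothety S R T)) (hextS : ExtVanishAll S T T)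
    (hM : IsGorensteinInjective Rᵐᵒᵖ M)
    (hT : (∃ n, ProjDimLE Rᵐᵒᵖ T n) ∨ (∃ n, InjDimLE Rᵐᵒᵖ T n)) : InBassClass S R T M := by
  obtain ⟨C, hinj, hC, hI, e⟩ := hM
  have hext {K : Type u} [AddCommGroup K] [Module Rᵐᵒᵖ K] (hK : C.IsCocycleModule K) (i : ℕ) :
      ExtVanishes Rᵐᵒᵖ T K (i + 1) := by
    obtain ⟨n, hn⟩ | ⟨n, hn⟩ := hT
    · exact hK.extVanishes_of_projDimLE hC hinj hn i
    · exact HasClassCoresolution.extVanishes hn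
        (fun E hE => hK.extVanishes_of_exact_compRight hC hinj (hI E hE)) i
  have hM : C.IsCocycleModule M := ⟨0, e⟩
  exact hM.inBassClass hres hR hextS hC hinj (fun j => hext (ZComplex.isCocycleModule_ker j) 0)
    (extVanishAll_iff.2 (hext hM))

end BassClass

/-- Let `T` be a Wakamatsu tilting `(S,R)`-bimodule and `M` a Gorenstein
injective right `R`-module. If either `pd(T_R) < ∞` or `id(T_R) < ∞`, then `M ∈ ℬ_T(R)`.
(No tensorly-faithfulness assumption is needed.) -/
theorem gorensteinInjective_mem_bass
    (S R : Type u) [Ring S] [Ring R]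
    (T : Type u) [AddCommGroup T] [Module S T] [Module Rᵐᵒᵖ T] [SMulCommClass S Rᵐᵒᵖ T]
    (hW : IsWakamatsuTilting S R T)
    (M : Type u) [AddCommGroup M] [Module Rᵐᵒᵖ M] (hM : IsGorensteinInjective Rᵐᵒᵖ M)
    (hT : (∃ n, ProjDimLE Rᵐᵒᵖ T n) ∨ (∃ n, InjDimLE Rᵐᵒᵖ T n)) :
    InBassClass S R T M :=
  gorensteinInjective_mem_bass_general hW.fgProjResS hW.bijR hW.extS hM hT
end
end
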